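/- Let f be the bilinear RFIF from the bilinear RFIF setup, with scaling factors steady and having uniform sums {γ_rt} under a compatible partition B={B_r}_{r=1}^m, and suppose the matrix G=(γ_rt) is irreducible. Then: (1) if {1,...,m} is non-degenerate and ρ(G)>K, the box dimension of Γf exists and equals 1 + log ρ(G)/log K; (2) otherwise, the box dimension of Γf exists and equals 2. -/

import Mathlib

/- Bilinear recurrent fractal interpolation surfaces on [0,1]² (Liang–Ruan,
   "Construction and box dimension of recurrent fractal interpolation surfaces"). -/

noncomputable section
open Set Filter

namespace RFIS

/-- The grid point `x_i = i / N` (also used for `y_j = j / N`). -/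
def xg (N i : ℕ) : ℝ := (i : ℝ) / (N : ℝ)

/-- The interval `I_i = [x_{i-1}, x_i]` (also `J_j`). -/
def Ii (N i : ℕ) : Set ℝ := Icc (xg N (i - 1)) (xg N i)

/-- The unit square `[0,1]²`. -/
def sq : Set (ℝ × ℝ) := Icc (0 : ℝ) 1 ×ˢ Icc (0 : ℝ) 1

/-- The cell `D_{ij} = I_i × J_j`. -/
def Dij (N i j : ℕ) : Set (ℝ × ℝ) := Ii N i ×ˢ Ii N j

/-- The point `x'_i = x_{px i}` chosen from the grid. -/
def xp (N : ℕ) (px : ℕ → ℕ) (i : ℕ) : ℝ := xg N (px i)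

/-- The interval `I'_i`, with endpoints `x'_{i-1}` and `x'_i`. -/
def Ii' (N : ℕ) (px : ℕ → ℕ) (i : ℕ) : Set ℝ := uIcc (xp N px (i - 1)) (xp N px i)

/-- The domain `D'_{ij} = I'_i × J'_j`. -/
def Dij' (N : ℕ) (px py : ℕ → ℕ) (i j : ℕ) : Set (ℝ × ℝ) := Ii' N px i ×ˢ Ii' N py j

/-- The affine map `u_i : I'_i → I_i` with `u_i(x'_{i-1}) = x_{i-1}` and `u_i(x'_i) = x_i`
(also used for `v_j`). -/
def usub (N : ℕ) (px : ℕ → ℕ) (i : ℕ) (t : ℝ) : ℝ :=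
  xg N (i - 1) + (t - xp N px (i - 1)) * ((xg N i - xg N (i - 1)) / (xp N px i - xp N px (i - 1)))

/-- `F` is bilinear on `E`: of the form `a + b x + c y + d x y` on `E`. -/
def IsBilinearOn (F : ℝ × ℝ → ℝ) (E : Set (ℝ × ℝ)) : Prop :=
  ∃ a b c d : ℝ, ∀ p ∈ E, F p = a + b * p.1 + c * p.2 + d * p.1 * p.2

/-- The bilinear RFIF setup on `[0,1]²`: data `z_{ij}` on the uniform `N × N` grid
(`M = N`, `x_i = y_i = i/N`), vertical scaling factors `s_{ij}` with `|s_{ij}| < 1`,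
the points `x'_i = x_{px i}`, `y'_j = y_{py j}` with `|I'_i| = K |I_i|`, `|J'_j| = K |J_j|`
and the domains `D'_{ij}` pairwise equal or with disjoint interiors; the functions `S`, `h`
bilinear on each cell with the prescribed grid values, the bilinear functions `g_{ij}` with
corner values `z'`, and the bilinear RFIF `f`: the continuous function interpolating the
data and satisfying `f(u_i x, v_j y) = S(u_i x, v_j y)(f(x,y) − g_{ij}(x,y)) + h(u_i x, v_j y)`
on each `D'_{ij}`. -/
structure Setup where
  N : ℕ
  K : ℕ
  hN : 2 ≤ N
  hK : 2 ≤ K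
  px : ℕ → ℕ
  py : ℕ → ℕ
  hpx : ∀ i ≤ N, px i ≤ N
  hpy : ∀ j ≤ N, py j ≤ N
  hKx : ∀ i, 1 ≤ i → i ≤ N → |xp N px i - xp N px (i - 1)| = (K : ℝ) * (xg N i - xg N (i - 1))
  hKy : ∀ j, 1 ≤ j → j ≤ N → |xp N py j - xp N py (j - 1)| = (K : ℝ) * (xg N j - xg N (j - 1))
  hdisj : ∀ i₁ j₁ i₂ j₂, 1 ≤ i₁ → i₁ ≤ N → 1 ≤ j₁ → j₁ ≤ N → 1 ≤ i₂ → i₂ ≤ N → 1 ≤ j₂ → j₂ ≤ N →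
    Dij' N px py i₁ j₁ = Dij' N px py i₂ j₂ ∨
      interior (Dij' N px py i₁ j₁) ∩ interior (Dij' N px py i₂ j₂) = ∅
  z : ℕ → ℕ → ℝ
  s : ℕ → ℕ → ℝ
  hs : ∀ i ≤ N, ∀ j ≤ N, |s i j| < 1
  S : ℝ × ℝ → ℝ
  hScont : ContinuousOn S sq
  hSbil : ∀ i j, 1 ≤ i → i ≤ N → 1 ≤ j → j ≤ N → IsBilinearOn S (Dij N i j)
  hSval : ∀ i ≤ N, ∀ j ≤ N, S (xg N i, xg N j) = s i j
  h : ℝ × ℝ → ℝ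
  hhcont : ContinuousOn h sq
  hhbil : ∀ i j, 1 ≤ i → i ≤ N → 1 ≤ j → j ≤ N → IsBilinearOn h (Dij N i j)
  hhval : ∀ i ≤ N, ∀ j ≤ N, h (xg N i, xg N j) = z i j
  g : ℕ → ℕ → ℝ × ℝ → ℝ
  hgbil : ∀ i j, 1 ≤ i → i ≤ N → 1 ≤ j → j ≤ N → IsBilinearOn (g i j) (Dij' N px py i j)
  hgval : ∀ i j, 1 ≤ i → i ≤ N → 1 ≤ j → j ≤ N →
    ∀ k ∈ ({i - 1, i} : Set ℕ), ∀ l ∈ ({j - 1, j} : Set ℕ),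
      g i j (xp N px k, xp N py l) = z (px k) (py l)
  f : ℝ × ℝ → ℝ
  hfcont : ContinuousOn f sq
  hfval : ∀ i ≤ N, ∀ j ≤ N, f (xg N i, xg N j) = z i j
  hfeq : ∀ i j, 1 ≤ i → i ≤ N → 1 ≤ j → j ≤ N → ∀ p ∈ Dij' N px py i j,
    f (usub N px i p.1, usub N py j p.2)
      = S (usub N px i p.1, usub N py j p.2) * (f p - g i j p)
        + h (usub N px i p.1, usub N py j p.2)

/-- The oscillation `O(f, E) = sup {f(x') − f(x'') : x', x'' ∈ E}`. -/
def Osc (f : ℝ × ℝ → ℝ) (E : Set (ℝ × ℝ)) : ℝ :=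
  sSup {d : ℝ | ∃ p ∈ E, ∃ q ∈ E, d = f p - f q}

/-- The dyadic-type square `Dⁿ_{kl} = [(k-1)/(KⁿN), k/(KⁿN)] × [(l-1)/(KⁿN), l/(KⁿN)]`. -/
def Dn (N K n k l : ℕ) : Set (ℝ × ℝ) :=
  Icc (((k : ℝ) - 1) / ((K : ℝ) ^ n * (N : ℝ))) ((k : ℝ) / ((K : ℝ) ^ n * (N : ℝ))) ×ˢ
    Icc (((l : ℝ) - 1) / ((K : ℝ) ^ n * (N : ℝ))) ((l : ℝ) / ((K : ℝ) ^ n * (N : ℝ)))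

open Classical in
/-- `O(f, n, U) = Σ { O(f, Dⁿ_{kl}) : Dⁿ_{kl} ⊆ U }`. -/
def OscSum (f : ℝ × ℝ → ℝ) (N K n : ℕ) (U : Set (ℝ × ℝ)) : ℝ :=
  ∑ k ∈ Finset.Icc 1 (K ^ n * N), ∑ l ∈ Finset.Icc 1 (K ^ n * N),
    if Dn N K n k l ⊆ U then Osc f (Dn N K n k l) else 0

/-- The `ε`-coordinate cube `∏_{i=1}^3 [k_i ε, (k_i+1) ε]` in `ℝ³`. -/
def cube (ε : ℝ) (k : ℤ × ℤ × ℤ) : Set (ℝ × ℝ × ℝ) :=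
  Icc ((k.1 : ℝ) * ε) (((k.1 : ℝ) + 1) * ε) ×ˢ
    Icc ((k.2.1 : ℝ) * ε) (((k.2.1 : ℝ) + 1) * ε) ×ˢ
      Icc ((k.2.2 : ℝ) * ε) (((k.2.2 : ℝ) + 1) * ε)

/-- `N_E(ε)`: the number of `ε`-coordinate cubes intersecting `E`. -/
def Ncubes (E : Set (ℝ × ℝ × ℝ)) (ε : ℝ) : ℕ :=
  {k : ℤ × ℤ × ℤ | (cube ε k ∩ E).Nonempty}.ncard

/-- `log N_E(ε) / log (1/ε)`. -/
def boxRatio (E : Set (ℝ × ℝ × ℝ)) (ε : ℝ) : ℝ :=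
  Real.log (Ncubes E ε) / Real.log (1 / ε)

/-- The upper box dimension `lim sup_{ε→0+} log N_E(ε) / log (1/ε)`. -/
def upperBoxDim (E : Set (ℝ × ℝ × ℝ)) : ℝ :=
  limsup (boxRatio E) (nhdsWithin 0 (Ioi 0))

/-- The lower box dimension `lim inf_{ε→0+} log N_E(ε) / log (1/ε)`. -/
def lowerBoxDim (E : Set (ℝ × ℝ × ℝ)) : ℝ :=
  liminf (boxRatio E) (nhdsWithin 0 (Ioi 0))

/-- The box dimension of `E` exists and equals `d`. -/
def HasBoxDim (E : Set (ℝ × ℝ × ℝ)) (d : ℝ) : Prop :=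
  Tendsto (boxRatio E) (nhdsWithin 0 (Ioi 0)) (nhds d)

/-- The graph `Γ f|_E = {(x, y, f(x,y)) : (x,y) ∈ E}`. -/
def graphOn (f : ℝ × ℝ → ℝ) (E : Set (ℝ × ℝ)) : Set (ℝ × ℝ × ℝ) :=
  (fun p : ℝ × ℝ => (p.1, p.2, f p)) '' E

/-- `B` is a partition of `[0,1]²`: nonempty sets covering `[0,1]²` with pairwise
disjoint interiors. -/
def IsPartition (m : ℕ) (B : Fin m → Set (ℝ × ℝ)) : Prop :=
  (∀ r, (B r).Nonempty) ∧ (⋃ r, B r) = sq ∧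
    ∀ r t, r ≠ t → interior (B r) ∩ interior (B t) = ∅

/-- The partition `B` is compatible with `{D_{ij}, D'_{ij}}`: every `D_{ij}` lies in some
`B_r` and every `D'_{ij}` in some `B_t`; and whenever some `(i,j)` has `D_{ij} ⊆ B_r` and
`D'_{ij} ⊆ B_t`, then `B_t = ⋃ {D'_{kl} : D_{kl} ⊆ B_r, D'_{kl} ⊆ B_t}`. -/
def IsCompatible (st : Setup) {m : ℕ} (B : Fin m → Set (ℝ × ℝ)) : Prop :=
  (∀ i j, 1 ≤ i → i ≤ st.N → 1 ≤ j → j ≤ st.N →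
    (∃ r, Dij st.N i j ⊆ B r) ∧ (∃ t, Dij' st.N st.px st.py i j ⊆ B t)) ∧
  (∀ r t : Fin m,
    (∃ i j, 1 ≤ i ∧ i ≤ st.N ∧ 1 ≤ j ∧ j ≤ st.N ∧
      Dij st.N i j ⊆ B r ∧ Dij' st.N st.px st.py i j ⊆ B t) →
    B t = ⋃ (k : ℕ) (l : ℕ)
      (_ : 1 ≤ k ∧ k ≤ st.N ∧ 1 ≤ l ∧ l ≤ st.N ∧
        Dij st.N k l ⊆ B r ∧ Dij' st.N st.px st.py k l ⊆ B t),
      Dij' st.N st.px st.py k l)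

/-- The index set `Σ_N × Σ_N = {1,…,N}²`. -/
def idxS (N : ℕ) : Finset (ℕ × ℕ) := Finset.Icc 1 N ×ˢ Finset.Icc 1 N

open Classical in
/-- `Λ_r = {(i,j) : D_{ij} ⊆ B_r}`. -/
def Lam (st : Setup) {m : ℕ} (B : Fin m → Set (ℝ × ℝ)) (r : Fin m) : Finset (ℕ × ℕ) :=
  (idxS st.N).filter fun ij => Dij st.N ij.1 ij.2 ⊆ B r

open Classical in
/-- `Λ'_t = {(i,j) : D'_{ij} ⊆ B_t}`. -/
def Lam' (st : Setup) {m : ℕ} (B : Fin m → Set (ℝ × ℝ)) (t : Fin m) : Finset (ℕ × ℕ) :=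
  (idxS st.N).filter fun ij => Dij' st.N st.px st.py ij.1 ij.2 ⊆ B t

/-- The rectangle `[x_α, x_{α+K}] × [y_β, y_{β+K}]`. -/
def rect (N K α β : ℕ) : Set (ℝ × ℝ) :=
  Icc (xg N α) (xg N (α + K)) ×ˢ Icc (xg N β) (xg N (β + K))

open Classical in
/-- `Λ_r(α,β) = {(i,j) ∈ Λ_r : D'_{ij} = [x_α, x_{α+K}] × [y_β, y_{β+K}]}`. -/
def LamAB (st : Setup) {m : ℕ} (B : Fin m → Set (ℝ × ℝ)) (r : Fin m) (α β : ℕ) :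
    Finset (ℕ × ℕ) :=
  (Lam st B r).filter fun ij => Dij' st.N st.px st.py ij.1 ij.2 = rect st.N st.K α β

/-- The vertical scaling factors are steady: for each cell, the four corner factors are
all nonnegative or all nonpositive. -/
def Steady (st : Setup) : Prop :=
  ∀ i j, 1 ≤ i → i ≤ st.N → 1 ≤ j → j ≤ st.N →
    (0 ≤ st.s (i - 1) (j - 1) ∧ 0 ≤ st.s (i - 1) j ∧ 0 ≤ st.s i (j - 1) ∧ 0 ≤ st.s i j) ∨
    (st.s (i - 1) (j - 1) ≤ 0 ∧ st.s (i - 1) j ≤ 0 ∧ st.s i (j - 1) ≤ 0 ∧ st.s i j ≤ 0)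

/-- The sum `Σ_{(i,j) ∈ Λ_r(α,β)} |S(u_i(x_a), v_j(y_b))|`. -/
def cSum (st : Setup) {m : ℕ} (B : Fin m → Set (ℝ × ℝ)) (r : Fin m) (α β a b : ℕ) : ℝ :=
  ∑ ij ∈ LamAB st B r α β,
    |st.S (usub st.N st.px ij.1 (xg st.N a), usub st.N st.py ij.2 (xg st.N b))|

/-- The vertical scaling factors have uniform sums `γ_{rt}` under the partition `B`:
whenever `Λ_r ∩ Λ'_t ≠ ∅` and `[x_α, x_{α+K}] × [y_β, y_{β+K}] ∈ {D'_{ij} : (i,j) ∈ Λ_r ∩ Λ'_t}`,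
the four corner sums `Σ_{(i,j) ∈ Λ_r(α,β)} |S(u_i(x_a), v_j(y_b))|`,
`(a,b) ∈ {α, α+K} × {β, β+K}`, all equal `γ_{rt}`. -/
def HasUniformSums (st : Setup) {m : ℕ} (B : Fin m → Set (ℝ × ℝ))
    (γ : Fin m → Fin m → ℝ) : Prop :=
  ∀ r t : Fin m, (Lam st B r ∩ Lam' st B t).Nonempty →
    ∀ α β : ℕ, α + st.K ≤ st.N → β + st.K ≤ st.N →
      (∃ ij ∈ Lam st B r ∩ Lam' st B t,
        Dij' st.N st.px st.py ij.1 ij.2 = rect st.N st.K α β) →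
      cSum st B r α β α β = γ r t ∧ cSum st B r α β (α + st.K) β = γ r t ∧
      cSum st B r α β α (β + st.K) = γ r t ∧ cSum st B r α β (α + st.K) (β + st.K) = γ r t

/-- `γ_{rt} = 0` whenever `Λ_r ∩ Λ'_t = ∅`. -/
def GammaZero (st : Setup) {m : ℕ} (B : Fin m → Set (ℝ × ℝ))
    (γ : Fin m → Fin m → ℝ) : Prop :=
  ∀ r t : Fin m, Lam st B r ∩ Lam' st B t = ∅ → γ r t = 0

/-- There is an `n`-path (for some `n ≥ 1`) from `t` to `r` in the matrix `γ`:
a sequence `i_0 = t, …, i_n = r` with `γ_{i_k, i_{k-1}} > 0` for `k = 1, …, n`. -/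
def IsPathFrom {m : ℕ} (γ : Fin m → Fin m → ℝ) (t r : Fin m) : Prop :=
  ∃ n : ℕ, 1 ≤ n ∧ ∃ c : ℕ → Fin m, c 0 = t ∧ c n = r ∧
    ∀ k, 1 ≤ k → k ≤ n → 0 < γ (c k) (c (k - 1))

/-- `r ∼ t`: there are paths both from `r` to `t` and from `t` to `r`. -/
def Conn {m : ℕ} (γ : Fin m → Fin m → ℝ) (r t : Fin m) : Prop :=
  IsPathFrom γ r t ∧ IsPathFrom γ t r

/-- A connected subset: `r ∼ t` for all `r, t ∈ V`. -/
def IsConnSet {m : ℕ} (γ : Fin m → Fin m → ℝ) (V : Finset (Fin m)) : Prop :=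
  ∀ r ∈ V, ∀ t ∈ V, Conn γ r t

/-- A connected component: a maximal (nonempty) connected subset. -/
def IsConnComp {m : ℕ} (γ : Fin m → Fin m → ℝ) (V : Finset (Fin m)) : Prop :=
  V.Nonempty ∧ IsConnSet γ V ∧ ∀ W : Finset (Fin m), IsConnSet γ W → V ⊆ W → W = V

/-- The spectral radius of a real square matrix: the largest modulus of a (complex)
eigenvalue. -/
def specRad {n : Type*} [Fintype n] [DecidableEq n] (A : Matrix n n ℝ) : ℝ :=
  sSup {x : ℝ | ∃ μ ∈ spectrum ℂ (A.map (algebraMap ℝ ℂ)), x = ‖μ‖}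

/-- The submatrix `G|_V` of `G = (γ_{rt})` indexed by a subset `V`. -/
def subMat {m : ℕ} (γ : Fin m → Fin m → ℝ) (V : Finset (Fin m)) :
    Matrix {x // x ∈ V} {x // x ∈ V} ℝ :=
  fun a b => γ a.1 b.1

/-- `(k,l)` is an ancestor of `(i,j)`: there is a chain `(i,j) = (i_0,j_0), …, (i_n,j_n) = (k,l)`
in `Σ_N × Σ_N` with `D_{i_τ j_τ} ⊆ D'_{i_{τ-1} j_{τ-1}}` for all `τ`. -/
def Ancestor (st : Setup) (i j k l : ℕ) : Prop :=
  ∃ n : ℕ, 1 ≤ n ∧ ∃ c : ℕ → ℕ × ℕ,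
    c 0 = (i, j) ∧ c n = (k, l) ∧
    (∀ τ ≤ n, 1 ≤ (c τ).1 ∧ (c τ).1 ≤ st.N ∧ 1 ≤ (c τ).2 ∧ (c τ).2 ≤ st.N) ∧
    ∀ τ, 1 ≤ τ → τ ≤ n →
      Dij st.N (c τ).1 (c τ).2 ⊆ Dij' st.N st.px st.py (c (τ - 1)).1 (c (τ - 1)).2

/-- `A(i,j) = {(i,j)} ∪ {ancestors of (i,j)}`. -/
def AncSet (st : Setup) (i j : ℕ) : Set (ℕ × ℕ) :=
  {(i, j)} ∪ {kl | Ancestor st i j kl.1 kl.2}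

/-- The pair `(i,j)` is degenerate: every `(k,l) ∈ A(i,j)` has all four vertical scaling
corner factors zero, or `z_{pq} = g_{kl}(x_p, y_q)` for all grid points `(x_p, y_q) ∈ D'_{kl}`. -/
def DegenPair (st : Setup) (i j : ℕ) : Prop :=
  ∀ kl ∈ AncSet st i j,
    (st.s (kl.1 - 1) (kl.2 - 1) = 0 ∧ st.s (kl.1 - 1) kl.2 = 0 ∧
      st.s kl.1 (kl.2 - 1) = 0 ∧ st.s kl.1 kl.2 = 0) ∨
    (∀ p ≤ st.N, ∀ q ≤ st.N, (xg st.N p, xg st.N q) ∈ Dij' st.N st.px st.py kl.1 kl.2 →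
      st.z p q = st.g kl.1 kl.2 (xg st.N p, xg st.N q))

/-- The index `r` is degenerate: every `(i,j) ∈ Λ_r` is degenerate. -/
def DegenIdx (st : Setup) {m : ℕ} (B : Fin m → Set (ℝ × ℝ)) (r : Fin m) : Prop :=
  ∀ ij ∈ Lam st B r, DegenPair st ij.1 ij.2

/-- A set `V` of indices is degenerate: every `r ∈ V` is degenerate. -/
def DegenComp (st : Setup) {m : ℕ} (B : Fin m → Set (ℝ × ℝ)) (V : Finset (Fin m)) : Prop :=
  ∀ r ∈ V, DegenIdx st B r

end RFIS

/-! Let `O_k` be the sum of the oscillations of `f` over the cells of the grid with `K ^ k * N`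
cells per side. For `ε` comparable to `1 / (K ^ k * N)`, the number of `ε`-cubes that meet the
graph is comparable to `O_k / ε + ε⁻²`, so the box dimension is governed by the growth rate of
`O_k`.

On `D_{ij}` the functional equation says that `f ∘ (u_i, v_j) = S ∘ (u_i, v_j) * (f - g_{ij})` up
to a bilinear function. Steadiness makes `|S|` bilinear on each cell, so the uniform sums at the
corners give that `∑ |S ∘ (u_i, v_j)|` over `Λ_r(α, β)` is constantly `γ_{rt}`. Split `O_k` into a
vector indexed by the classes `B_r`. As `S`, `h` and `g_{ij}` are Lipschitz on cells, this vector
satisfies `O_{k+1} ≤ G O_k + C K ^ k`, so that `O_k = O(θ ^ k)` for every `θ > max (ρ(G)) K`.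

For the lower bound, replace the oscillation over a cell by the error of bilinear interpolation
from its corners, which is linear in `f` and annihilates `g_{ij}` and `h`. Multiplying each branch
by the sign of `S` before summing then gives `V_{k+1} ≥ G V_k` without an error term, and by
irreducibility `V_k` is at least of order `ρ(G) ^ k` once it is nonzero. It vanishes only if
`f = h`, and in that case the functional equation forces `f = g_{ij}` wherever `S` is not
identically zero, which is degeneracy. In the degenerate case `f = h` conversely, so
`O_k = O(K ^ k)`. -/

namespace RFIS

open AffineMap (lineMap)

/-! ### Bilinear interpolation -/

section Interpolation

variable {F G : ℝ × ℝ → ℝ} {P Q σ : ℝ × ℝ} {X Y : Set ℝ}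

/-- The point with relative coordinates `σ` in the rectangle with opposite corners `P` and `Q`;
no order between the corners is assumed, so that reversed axes need no separate treatment. -/
def rectPoint (P Q σ : ℝ × ℝ) : ℝ × ℝ := (lineMap P.1 Q.1 σ.1, lineMap P.2 Q.2 σ.2)

/-- The value at relative coordinates `σ` of the bilinear function that agrees with `F` at the
four corners of the rectangle with opposite corners `P` and `Q`. -/
def bilerp (F : ℝ × ℝ → ℝ) (P Q σ : ℝ × ℝ) : ℝ :=
  lineMap (lineMap (F P) (F (Q.1, P.2)) σ.1) (lineMap (F (P.1, Q.2)) (F Q) σ.1) σ.2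

theorem image_rectPoint_sq (P Q : ℝ × ℝ) :
    rectPoint P Q '' sq = uIcc P.1 Q.1 ×ˢ uIcc P.2 Q.2 := by
  simp only [← segment_eq_uIcc, segment_eq_image_lineMap, ← prodMap_image_prod]
  rfl

theorem rectPoint_mem (hX : Convex ℝ X) (hY : Convex ℝ Y) (hP : P ∈ X ×ˢ Y) (hQ : Q ∈ X ×ˢ Y)
    (hσ : σ ∈ sq) : rectPoint P Q σ ∈ X ×ˢ Y :=
  ⟨hX.lineMap_mem hP.1 hQ.1 hσ.1, hY.lineMap_mem hP.2 hQ.2 hσ.2⟩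

theorem bilerp_eq (F : ℝ × ℝ → ℝ) (P Q σ : ℝ × ℝ) :
    bilerp F P Q σ = (1 - σ.1) * (1 - σ.2) * F P + σ.1 * (1 - σ.2) * F (Q.1, P.2) +
      (1 - σ.1) * σ.2 * F (P.1, Q.2) + σ.1 * σ.2 * F Q := by
  simp only [bilerp, AffineMap.lineMap_apply_ring]
  ring

theorem bilerp_congr (hP : P ∈ X ×ˢ Y) (hQ : Q ∈ X ×ˢ Y) (h : EqOn F G (X ×ˢ Y)) :
    bilerp F P Q σ = bilerp G P Q σ := by
  rw [bilerp, bilerp, h hP, h hQ, h (⟨hQ.1, hP.2⟩ : (Q.1, P.2) ∈ X ×ˢ Y),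
    h (⟨hP.1, hQ.2⟩ : (P.1, Q.2) ∈ X ×ˢ Y)]

theorem bilerp_mem {C : Set ℝ} (hC : Convex ℝ C) (hσ : σ ∈ sq) (h₀₀ : F P ∈ C)
    (h₁₀ : F (Q.1, P.2) ∈ C) (h₀₁ : F (P.1, Q.2) ∈ C) (h₁₁ : F Q ∈ C) : bilerp F P Q σ ∈ C :=
  hC.lineMap_mem (hC.lineMap_mem h₀₀ h₁₀ hσ.1) (hC.lineMap_mem h₀₁ h₁₁ hσ.1) hσ.2

theorem IsBilinearOn.mono {E E' : Set (ℝ × ℝ)} (hF : IsBilinearOn F E) (h : E' ⊆ E) :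
    IsBilinearOn F E' :=
  let ⟨a, b, c, d, hF⟩ := hF
  ⟨a, b, c, d, fun p hp => hF p (h hp)⟩

theorem IsBilinearOn.congr {E : Set (ℝ × ℝ)} (hF : IsBilinearOn F E) (h : EqOn G F E) :
    IsBilinearOn G E :=
  let ⟨a, b, c, d, hF⟩ := hF
  ⟨a, b, c, d, fun p hp => (h hp).trans (hF p hp)⟩

theorem isBilinearOn_const (r : ℝ) (E : Set (ℝ × ℝ)) : IsBilinearOn (fun _ => r) E :=
  ⟨r, 0, 0, 0, fun p _ => by ring⟩

theorem IsBilinearOn.const_mul {E : Set (ℝ × ℝ)} (r : ℝ) (hF : IsBilinearOn F E) :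
    IsBilinearOn (fun p => r * F p) E := by
  obtain ⟨a, b, c, d, hF⟩ := hF
  exact ⟨r * a, r * b, r * c, r * d, fun p hp => by simp only [hF p hp]; ring⟩

theorem IsBilinearOn.add {E : Set (ℝ × ℝ)} (hF : IsBilinearOn F E) (hG : IsBilinearOn G E) :
    IsBilinearOn (fun p => F p + G p) E := by
  obtain ⟨a, b, c, d, hF⟩ := hF
  obtain ⟨a', b', c', d', hG⟩ := hG
  exact ⟨a + a', b + b', c + c', d + d', fun p hp => by simp only [hF p hp, hG p hp]; ring⟩

theorem IsBilinearOn.sum {ι : Type*} {E : Set (ℝ × ℝ)} {s : Finset ι} {F : ι → ℝ × ℝ → ℝ}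
    (hF : ∀ i ∈ s, IsBilinearOn (F i) E) : IsBilinearOn (fun p => ∑ i ∈ s, F i p) E := by
  classical
  induction s using Finset.induction_on with
  | empty => simpa using isBilinearOn_const 0 E
  | insert i s hi ih =>
    simp only [Finset.sum_insert hi]
    exact (hF i (Finset.mem_insert_self i s)).add
      (ih fun j hj => hF j (Finset.mem_insert_of_mem hj))

theorem IsBilinearOn.comp_usub {E : Set (ℝ × ℝ)} (hF : IsBilinearOn F E) (N : ℕ) (p q : ℕ → ℕ)
    (i j : ℕ) : IsBilinearOn (fun P => F (usub N p i P.1, usub N q j P.2))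
      ((fun P => (usub N p i P.1, usub N q j P.2)) ⁻¹' E) := by
  have hu : ∀ (p : ℕ → ℕ) (i : ℕ), ∃ α β : ℝ, ∀ t, usub N p i t = α + β * t := fun p i =>
    ⟨usub N p i 0, usub N p i 1 - usub N p i 0, fun t => by simp only [usub]; ring⟩
  obtain ⟨α, β, hp⟩ := hu p i
  obtain ⟨α', β', hq⟩ := hu q j
  obtain ⟨a, b, c, d, hF⟩ := hF
  refine ⟨a + b * α + c * α' + d * α * α', b * β + d * β * α', c * β' + d * α * β', d * β * β',
    fun P hP => ?_⟩
  refine (hF _ hP).trans ?_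
  simp only [hp, hq]
  ring

theorem IsBilinearOn.apply_rectPoint (hF : IsBilinearOn F (X ×ˢ Y)) (hP : P ∈ X ×ˢ Y)
    (hQ : Q ∈ X ×ˢ Y) (hσ : rectPoint P Q σ ∈ X ×ˢ Y) :
    F (rectPoint P Q σ) = bilerp F P Q σ := by
  obtain ⟨a, b, c, d, h⟩ := hF
  rw [bilerp_eq, h _ hσ, h _ hP, h _ hQ, h (Q.1, P.2) ⟨hQ.1, hP.2⟩, h (P.1, Q.2) ⟨hP.1, hQ.2⟩]
  simp only [rectPoint, AffineMap.lineMap_apply_ring]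
  ring

theorem IsBilinearOn.mem_of_corners {C : Set ℝ} (hC : Convex ℝ C)
    (hF : IsBilinearOn F (uIcc P.1 Q.1 ×ˢ uIcc P.2 Q.2)) (h₀₀ : F P ∈ C)
    (h₁₀ : F (Q.1, P.2) ∈ C) (h₀₁ : F (P.1, Q.2) ∈ C) (h₁₁ : F Q ∈ C) {q : ℝ × ℝ}
    (hq : q ∈ uIcc P.1 Q.1 ×ˢ uIcc P.2 Q.2) : F q ∈ C := by
  rw [← image_rectPoint_sq] at hq
  obtain ⟨σ, hσ, rfl⟩ := hq
  rw [hF.apply_rectPoint ⟨left_mem_uIcc, left_mem_uIcc⟩ ⟨right_mem_uIcc, right_mem_uIcc⟩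
    (image_rectPoint_sq P Q ▸ mem_image_of_mem _ hσ)]
  exact bilerp_mem hC hσ h₀₀ h₁₀ h₀₁ h₁₁

theorem IsBilinearOn.eq_of_corners
    (hF : IsBilinearOn F (uIcc P.1 Q.1 ×ˢ uIcc P.2 Q.2))
    (hG : IsBilinearOn G (uIcc P.1 Q.1 ×ˢ uIcc P.2 Q.2)) (h₀₀ : F P = G P)
    (h₁₀ : F (Q.1, P.2) = G (Q.1, P.2)) (h₀₁ : F (P.1, Q.2) = G (P.1, Q.2)) (h₁₁ : F Q = G Q) :
    EqOn F G (uIcc P.1 Q.1 ×ˢ uIcc P.2 Q.2) := by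
  intro q hq
  have hP : P ∈ uIcc P.1 Q.1 ×ˢ uIcc P.2 Q.2 := ⟨left_mem_uIcc, left_mem_uIcc⟩
  have hQ : Q ∈ uIcc P.1 Q.1 ×ˢ uIcc P.2 Q.2 := ⟨right_mem_uIcc, right_mem_uIcc⟩
  rw [← image_rectPoint_sq] at hq
  obtain ⟨σ, hσ, rfl⟩ := hq
  have hmem := image_rectPoint_sq P Q ▸ mem_image_of_mem (rectPoint P Q) hσ
  rw [hF.apply_rectPoint hP hQ hmem, hG.apply_rectPoint hP hQ hmem, bilerp, bilerp, h₀₀, h₁₀,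
    h₀₁, h₁₁]

theorem IsBilinearOn.exists_lipschitzOnWith {E : Set (ℝ × ℝ)} (hF : IsBilinearOn F E)
    (hE : Bornology.IsBounded E) : ∃ L, LipschitzOnWith L F E := by
  obtain ⟨a, b, c, d, h⟩ := hF
  obtain ⟨R, hR⟩ := hE.subset_closedBall 0
  have hsmooth : ContDiff ℝ 1 fun p : ℝ × ℝ => a + b * p.1 + c * p.2 + d * p.1 * p.2 := by
    fun_prop
  obtain ⟨L, hL⟩ := hsmooth.contDiffOn.exists_lipschitzOnWith one_ne_zero
    (convex_closedBall (0 : ℝ × ℝ) R) (isCompact_closedBall 0 R)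
  refine ⟨L, fun p hp q hq => ?_⟩
  rw [h p hp, h q hq]
  exact hL (hR hp) (hR hq)

end Interpolation

/-! ### Grids -/

section Grid

variable {L M : ℕ}

/-- The `a`-th interval of the uniform subdivision of `[0,1]` into `M` intervals, counted
from `0`. -/
def gridIcc (M a : ℕ) : Set ℝ := Icc (xg M a) (xg M (a + 1))

/-- The cell of the uniform `M × M` subdivision of `[0,1]²` with index `c`, counted
from `(0, 0)`; thus `gridCell N (i, j)` is `D_{i+1,j+1}`. -/
def gridCell (M : ℕ) (c : ℕ × ℕ) : Set (ℝ × ℝ) := gridIcc M c.1 ×ˢ gridIcc M c.2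

/-- The indices of the cells of the uniform `M × M` subdivision of `[0,1]²`. -/
def cells (M : ℕ) : Finset (ℕ × ℕ) := Finset.range M ×ˢ Finset.range M

/-- The index of the cell of the `M × M` grid that contains cell `c` of the
`L * M × L * M` grid. -/
def coarsen (L : ℕ) (c : ℕ × ℕ) : ℕ × ℕ := (c.1 / L, c.2 / L)

/-- The lower left corner of a cell. -/
def lowerCorner (M : ℕ) (c : ℕ × ℕ) : ℝ × ℝ := (xg M c.1, xg M c.2)

/-- The upper right corner of a cell. -/
def upperCorner (M : ℕ) (c : ℕ × ℕ) : ℝ × ℝ := (xg M (c.1 + 1), xg M (c.2 + 1))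

/-- The midpoint of the `a`-th interval of the uniform subdivision of `[0,1]`; it lies in a
union of closed grid intervals only if the whole interval does. -/
def gridMid (M a : ℕ) : ℝ := ((a : ℝ) + 1 / 2) / M

/-- The midpoint of a cell. -/
def cellMid (M : ℕ) (c : ℕ × ℕ) : ℝ × ℝ := (gridMid M c.1, gridMid M c.2)

theorem mem_cells {c : ℕ × ℕ} : c ∈ cells M ↔ c.1 < M ∧ c.2 < M := by
  simp [cells]

theorem card_cells (M : ℕ) : (cells M).card = M ^ 2 := by
  rw [cells, Finset.card_product, Finset.card_range, pow_two]

theorem monotone_xg (M : ℕ) : Monotone (xg M) := fun a b h => by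
  unfold xg
  gcongr

theorem strictMono_xg (hM : 0 < M) : StrictMono (xg M) := fun a b h => by
  unfold xg
  gcongr

theorem xg_mem_Icc {a : ℕ} (h : a ≤ M) : xg M a ∈ Icc (0 : ℝ) 1 :=
  ⟨by unfold xg; positivity, div_le_one_of_le₀ (by exact_mod_cast h) M.cast_nonneg⟩

theorem xg_mul_mul (hL : 0 < L) (M a : ℕ) : xg (L * M) (L * a) = xg M a := by
  unfold xg
  push_cast
  exact mul_div_mul_left _ _ (by positivity)

theorem gridIcc_eq_uIcc (M a : ℕ) : gridIcc M a = uIcc (xg M a) (xg M (a + 1)) :=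
  (uIcc_of_le (monotone_xg M a.le_succ)).symm

theorem gridCell_eq_uIcc (M : ℕ) (c : ℕ × ℕ) :
    gridCell M c = uIcc (lowerCorner M c).1 (upperCorner M c).1 ×ˢ
      uIcc (lowerCorner M c).2 (upperCorner M c).2 := by
  rw [gridCell, gridIcc_eq_uIcc, gridIcc_eq_uIcc]
  rfl

theorem image_rectPoint_corners (M : ℕ) (c : ℕ × ℕ) :
    rectPoint (lowerCorner M c) (upperCorner M c) '' sq = gridCell M c := by
  rw [image_rectPoint_sq, gridCell_eq_uIcc]

theorem lowerCorner_mem (M : ℕ) (c : ℕ × ℕ) : lowerCorner M c ∈ gridCell M c :=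
  gridCell_eq_uIcc M c ▸ ⟨left_mem_uIcc, left_mem_uIcc⟩

theorem upperCorner_mem (M : ℕ) (c : ℕ × ℕ) : upperCorner M c ∈ gridCell M c :=
  gridCell_eq_uIcc M c ▸ ⟨right_mem_uIcc, right_mem_uIcc⟩

theorem gridCell_subset_sq {c : ℕ × ℕ} (hc : c ∈ cells M) : gridCell M c ⊆ sq := by
  rw [mem_cells] at hc
  exact prod_mono (Icc_subset_Icc (xg_mem_Icc (by lia)).1 (xg_mem_Icc (by lia)).2)
    (Icc_subset_Icc (xg_mem_Icc (by lia)).1 (xg_mem_Icc (by lia)).2)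

theorem gridIcc_subset_gridIcc_div (hL : 0 < L) (M a : ℕ) :
    gridIcc (L * M) a ⊆ gridIcc M (a / L) := by
  rw [gridIcc, gridIcc, ← xg_mul_mul hL M, ← xg_mul_mul hL M]
  exact Icc_subset_Icc (monotone_xg _ (Nat.mul_div_le a L))
    (monotone_xg _ (Nat.lt_mul_div_succ a hL))

theorem gridCell_subset_coarsen (hL : 0 < L) (M : ℕ) (c : ℕ × ℕ) :
    gridCell (L * M) c ⊆ gridCell M (coarsen L c) :=
  prod_mono (gridIcc_subset_gridIcc_div hL M _) (gridIcc_subset_gridIcc_div hL M _)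

theorem coarsen_mem_cells_iff (hL : 0 < L) {c : ℕ × ℕ} :
    coarsen L c ∈ cells M ↔ c ∈ cells (L * M) := by
  simp only [mem_cells, coarsen, Nat.div_lt_iff_lt_mul hL, mul_comm L]

theorem dist_le_of_mem_gridIcc {a : ℕ} {x y : ℝ} (hx : x ∈ gridIcc M a)
    (hy : y ∈ gridIcc M a) : dist x y ≤ 1 / M := by
  refine (Real.dist_le_of_mem_Icc hx hy).trans_eq ?_
  unfold xg
  push_cast
  ring

theorem dist_le_of_mem_gridCell {c : ℕ × ℕ} {p q : ℝ × ℝ} (hp : p ∈ gridCell M c)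
    (hq : q ∈ gridCell M c) : dist p q ≤ 1 / M :=
  max_le (dist_le_of_mem_gridIcc hp.1 hq.1) (dist_le_of_mem_gridIcc hp.2 hq.2)

theorem exists_mem_gridIcc_of_mem_Icc {a b : ℕ} (hab : a < b) {x : ℝ}
    (hx : x ∈ Icc (xg M a) (xg M b)) : ∃ c ∈ Finset.Ico a b, x ∈ gridIcc M c := by
  rcases hx.1.eq_or_lt with rfl | hlt
  · exact ⟨a, by simpa, left_mem_Icc.2 (monotone_xg M a.le_succ)⟩
  · have hmem : x ∈ ⋃ c ∈ Ico a b, Ioc (xg M c) (xg M (Order.succ c)) := by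
      rw [(monotone_xg M).biUnion_Ico_Ioc_map_succ]
      exact ⟨hlt, hx.2⟩
    obtain ⟨c, hc, hxc⟩ := mem_iUnion₂.1 hmem
    exact ⟨c, Finset.mem_Ico.2 hc, Ioc_subset_Icc_self hxc⟩

theorem exists_mem_gridIcc (hM : 0 < M) {x : ℝ} (hx : x ∈ Icc (0 : ℝ) 1) :
    ∃ a < M, x ∈ gridIcc M a := by
  have hM' : (M : ℝ) ≠ 0 := Nat.cast_ne_zero.2 hM.ne'
  obtain ⟨a, ha, hxa⟩ := exists_mem_gridIcc_of_mem_Icc (M := M) hM (x := x)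
    (by simpa [xg, hM'] using hx)
  exact ⟨a, (Finset.mem_Ico.1 ha).2, hxa⟩

theorem exists_mem_gridCell (hM : 0 < M) {p : ℝ × ℝ} (hp : p ∈ sq) :
    ∃ c ∈ cells M, p ∈ gridCell M c := by
  obtain ⟨a, ha, hpa⟩ := exists_mem_gridIcc hM hp.1
  obtain ⟨b, hb, hpb⟩ := exists_mem_gridIcc hM hp.2
  exact ⟨(a, b), mem_cells.2 ⟨ha, hb⟩, hpa, hpb⟩

theorem gridMid_mem_Ioo (hM : 0 < M) {a b c : ℕ} (hc : c ∈ Finset.Ico a b) :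
    gridMid M c ∈ Ioo (xg M a) (xg M b) := by
  have : (0 : ℝ) < M := by exact_mod_cast hM
  obtain ⟨hac, hcb⟩ := Finset.mem_Ico.1 hc
  have hac' : (a : ℝ) ≤ c := by exact_mod_cast hac
  have hcb' : (c : ℝ) + 1 ≤ b := by exact_mod_cast hcb
  constructor <;> unfold gridMid xg <;> gcongr <;> linarith

theorem mem_Ico_of_gridMid_mem_Icc {a b c : ℕ} (hM : 0 < M)
    (h : gridMid M c ∈ Icc (xg M a) (xg M b)) : c ∈ Finset.Ico a b := by
  have hM' : (0 : ℝ) < M := by exact_mod_cast hM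
  simp only [gridMid, xg, mem_Icc, div_le_div_iff_of_pos_right hM'] at h
  have hac : (a : ℝ) < c + 1 := by linarith
  have hcb : (c : ℝ) < b := by linarith
  exact Finset.mem_Ico.2 ⟨Nat.lt_succ_iff.1 (by exact_mod_cast hac), by exact_mod_cast hcb⟩

theorem cellMid_mem_interior (hM : 0 < M) (c : ℕ × ℕ) :
    cellMid M c ∈ interior (gridCell M c) := by
  rw [gridCell, interior_prod_eq, gridIcc, gridIcc, interior_Icc, interior_Icc]
  exact ⟨gridMid_mem_Ioo hM (by simp), gridMid_mem_Ioo hM (by simp)⟩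

end Grid

/-! ### Expanding nodes -/

section Nodes

variable {N K L : ℕ} {p : ℕ → ℕ} {i a : ℕ}

/-- The choice `x'_i = x_{p i}` of grid points is `K`-expanding: `|I'_i| = K |I_i|`, expressed
through the indices of the grid points. -/
structure ExpandingNodes (N K : ℕ) (p : ℕ → ℕ) : Prop where
  pos_N : 0 < N
  pos_K : 0 < K
  le : ∀ i ≤ N, p i ≤ N
  step : ∀ i < N, p (i + 1) = p i + K ∨ p i = p (i + 1) + K

/-- The index of the left endpoint of `I'_{i+1}`. -/
def blockStart (p : ℕ → ℕ) (i : ℕ) : ℕ := min (p i) (p (i + 1))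

/-- The indices of the grid intervals that make up `I'_{i+1}`. -/
def block (K : ℕ) (p : ℕ → ℕ) (i : ℕ) : Finset ℕ := Finset.Ico (blockStart p i) (blockStart p i + K)

/-- The index in the grid of mesh `1 / (L * K * N)` of the image under `u_{i+1}` of the `a`-th
interval of the grid of mesh `1 / (L * N)`; the order is reversed where `u_{i+1}` decreases. -/
def childIdx (K : ℕ) (p : ℕ → ℕ) (L i a : ℕ) : ℕ :=
  i * (L * K) + if p i ≤ p (i + 1) then a - blockStart p i * L
    else L * K - 1 - (a - blockStart p i * L)

theorem expandingNodes_of_abs_sub (hN : 0 < N) (hK : 0 < K) (hle : ∀ i ≤ N, p i ≤ N)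
    (h : ∀ i, 1 ≤ i → i ≤ N →
      |xp N p i - xp N p (i - 1)| = (K : ℝ) * (xg N i - xg N (i - 1))) :
    ExpandingNodes N K p := by
  refine ⟨hN, hK, hle, fun i hi => ?_⟩
  have hN' : (0 : ℝ) < N := by exact_mod_cast hN
  have hdist := h (i + 1) (by lia) hi
  simp only [Nat.add_sub_cancel, xp, xg, ← sub_div, abs_div, abs_of_pos hN', Nat.cast_add_one,
    add_sub_cancel_left, mul_one_div, div_left_inj' hN'.ne'] at hdist
  rcases (abs_eq K.cast_nonneg).1 hdist with hd | hd
  · exact .inl (by exact_mod_cast (by linarith : (p (i + 1) : ℝ) = p i + K))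
  · exact .inr (by exact_mod_cast (by linarith : (p i : ℝ) = p (i + 1) + K))

theorem usub_lineMap (N : ℕ) (p : ℕ → ℕ) (i : ℕ) (x y t : ℝ) :
    usub N p i (lineMap x y t) = lineMap (usub N p i x) (usub N p i y) t := by
  simp only [usub, AffineMap.lineMap_apply_ring]
  ring

theorem usub_image_uIcc (N : ℕ) (p : ℕ → ℕ) (i : ℕ) (x y : ℝ) :
    usub N p i '' uIcc x y = uIcc (usub N p i x) (usub N p i y) := by
  simp only [← segment_eq_uIcc, segment_eq_image_lineMap, image_image, usub_lineMap]

theorem usub_left (N : ℕ) (p : ℕ → ℕ) (i : ℕ) : usub N p i (xp N p (i - 1)) = xg N (i - 1) := by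
  simp [usub]

theorem mem_block_div_iff (hL : 0 < L) :
    a / L ∈ block K p i ↔ blockStart p i * L ≤ a ∧ a < blockStart p i * L + L * K := by
  rw [block, Finset.mem_Ico, Nat.le_div_iff_mul_le hL, Nat.div_lt_iff_lt_mul hL, add_mul,
    mul_comm K]

theorem bijOn_childIdx (hL : 0 < L) (hK : 0 < K) (p : ℕ → ℕ) (i : ℕ) :
    BijOn (childIdx K p L i) {a | a / L ∈ block K p i} {e | e / (L * K) = i} := by
  have hLK : 0 < L * K := Nat.mul_pos hL hK
  simp only [mem_block_div_iff hL, Nat.div_eq_iff hLK]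
  generalize hd : L * K = d at hLK
  have : (i + 1) * d = i * d + d := by ring
  refine ⟨fun a ha => ?_, fun a ha b hb hab => ?_, fun e he => ?_⟩
  · simp only [mem_ofPred_eq, childIdx, hd] at ha ⊢
    split_ifs <;> lia
  · simp only [mem_ofPred_eq, childIdx, hd] at ha hb hab
    split_ifs at hab <;> lia
  · simp only [mem_ofPred_eq] at he
    by_cases hp : p i ≤ p (i + 1)
    · exact ⟨blockStart p i * L + (e - i * d), ⟨by lia, by lia⟩, by
        simp only [childIdx, if_pos hp, hd]; lia⟩
    · exact ⟨blockStart p i * L + (d - 1 - (e - i * d)), ⟨by lia, by lia⟩, by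
        simp only [childIdx, if_neg hp, hd]; lia⟩

namespace ExpandingNodes

variable (H : ExpandingNodes N K p)
include H

theorem blockStart_add_le (hi : i < N) : blockStart p i + K ≤ N := by
  have := H.step i hi
  have := H.le i hi.le
  have := H.le (i + 1) hi
  unfold blockStart
  lia

theorem lt_of_mem_block (hi : i < N) (ha : a ∈ block K p i) : a < N :=
  (Finset.mem_Ico.1 ha).2.trans_le (H.blockStart_add_le hi)

theorem xp_succ_ne (hi : i < N) : xp N p (i + 1) ≠ xp N p i := by
  have := H.pos_K
  have hp : p (i + 1) ≠ p i := by have := H.step i hi; lia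
  exact fun h => hp ((strictMono_xg H.pos_N).injective h)

theorem usub_right (hi : i < N) : usub N p (i + 1) (xp N p (i + 1)) = xg N (i + 1) := by
  rw [usub, Nat.add_sub_cancel, mul_div_cancel₀ _ (sub_ne_zero.2 (H.xp_succ_ne hi)),
    add_sub_cancel]

theorem usub_image_Ii' (hi : i < N) : usub N p (i + 1) '' Ii' N p (i + 1) = gridIcc N i := by
  rw [Ii', usub_image_uIcc, usub_left, H.usub_right hi, Nat.add_sub_cancel, gridIcc_eq_uIcc]

theorem Ii'_eq (hi : i < N) :
    Ii' N p (i + 1) = Icc (xg N (blockStart p i)) (xg N (blockStart p i + K)) := by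
  rw [Ii', xp, xp, Nat.add_sub_cancel]
  rcases H.step i hi with h | h
  · rw [h, blockStart, h, min_eq_left (by lia), uIcc_of_le (monotone_xg N (by lia))]
  · rw [h, blockStart, h, min_eq_right (by lia), uIcc_of_ge (monotone_xg N (by lia))]

theorem gridIcc_subset_Ii' (hi : i < N) (ha : a ∈ block K p i) :
    gridIcc N a ⊆ Ii' N p (i + 1) := by
  rw [H.Ii'_eq hi]
  rw [block, Finset.mem_Ico] at ha
  exact Icc_subset_Icc (monotone_xg N ha.1) (monotone_xg N ha.2)

theorem mem_block_of_gridMid_mem (hi : i < N) (h : gridMid N a ∈ Ii' N p (i + 1)) :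
    a ∈ block K p i :=
  mem_Ico_of_gridMid_mem_Icc H.pos_N (H.Ii'_eq hi ▸ h)

theorem usub_eq (hi : i < N) (t : ℝ) :
    usub N p (i + 1) t = if p i ≤ p (i + 1) then (i : ℝ) / N + (t - blockStart p i / N) / K
      else ((i : ℝ) + 1) / N - (t - blockStart p i / N) / K := by
  have hN : (N : ℝ) ≠ 0 := by exact_mod_cast H.pos_N.ne'
  have hK : (K : ℝ) ≠ 0 := by exact_mod_cast H.pos_K.ne'
  have hK' := H.pos_K
  simp only [usub, xp, xg, Nat.add_sub_cancel, blockStart]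
  rcases H.step i hi with h | h
  · rw [if_pos (by lia), min_eq_left (by lia), h]
    push_cast
    rw [← sub_div, ← sub_div, add_sub_cancel_left, add_sub_cancel_left]
    field_simp
  · rw [if_neg (by lia), min_eq_right (by lia), h]
    push_cast
    rw [← sub_div, ← sub_div, add_sub_cancel_left, sub_add_cancel_left]
    field_simp
    ring

theorem usub_xg (hL : 0 < L) (hi : i < N) (ha : a / L ∈ block K p i) :
    (usub N p (i + 1) (xg (L * N) a) = xg (L * K * N) (childIdx K p L i a) ∧
      usub N p (i + 1) (xg (L * N) (a + 1)) = xg (L * K * N) (childIdx K p L i a + 1)) ∨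
    (usub N p (i + 1) (xg (L * N) a) = xg (L * K * N) (childIdx K p L i a + 1) ∧
      usub N p (i + 1) (xg (L * N) (a + 1)) = xg (L * K * N) (childIdx K p L i a)) := by
  have hN : (N : ℝ) ≠ 0 := by exact_mod_cast H.pos_N.ne'
  have hK : (K : ℝ) ≠ 0 := by exact_mod_cast H.pos_K.ne'
  have hL' : (L : ℝ) ≠ 0 := by exact_mod_cast hL.ne'
  obtain ⟨hlo, hhi⟩ := (mem_block_div_iff hL).1 ha
  simp only [H.usub_eq hi, childIdx, xg]
  split_ifs
  · left
    push_cast [Nat.cast_sub hlo]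
    constructor <;> (field_simp; try ring)
  · right
    push_cast [Nat.cast_sub hlo, Nat.cast_sub (show a - blockStart p i * L ≤ L * K - 1 by lia),
      Nat.cast_sub (show 1 ≤ L * K by lia)]
    constructor <;> (field_simp; ring)

theorem usub_image_gridIcc (hL : 0 < L) (hi : i < N) (ha : a / L ∈ block K p i) :
    usub N p (i + 1) '' gridIcc (L * N) a = gridIcc (L * K * N) (childIdx K p L i a) := by
  rw [gridIcc_eq_uIcc, usub_image_uIcc, gridIcc_eq_uIcc]
  rcases H.usub_xg hL hi ha with ⟨h₀, h₁⟩ | ⟨h₀, h₁⟩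
  · rw [h₀, h₁]
  · rw [h₀, h₁, uIcc_comm]

end ExpandingNodes

theorem bijOn_childIdx_cells {px py : ℕ → ℕ} (Hx : ExpandingNodes N K px)
    (Hy : ExpandingNodes N K py) (hL : 0 < L) {ij : ℕ × ℕ} (hij : ij ∈ cells N) :
    BijOn (Prod.map (childIdx K px L ij.1) (childIdx K py L ij.2))
      {c ∈ cells (L * N) | coarsen L c ∈ block K px ij.1 ×ˢ block K py ij.2}
      {e ∈ cells (L * K * N) | coarsen (L * K) e = ij} := by
  obtain ⟨hi, hj⟩ := mem_cells.1 hij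
  convert (bijOn_childIdx hL Hx.pos_K px ij.1).prodMap (bijOn_childIdx hL Hy.pos_K py ij.2) using 1
  · rfl
  · ext c
    simp only [coarsen, Finset.mem_product, mem_prod, mem_ofPred_eq, and_iff_right_iff_imp,
      ← coarsen_mem_cells_iff hL, mem_cells]
    exact fun h => ⟨Hx.lt_of_mem_block hi h.1, Hy.lt_of_mem_block hj h.2⟩
  · ext e
    simp only [← coarsen_mem_cells_iff (Nat.mul_pos hL Hx.pos_K), mem_prod, mem_ofPred_eq]
    exact ⟨fun h => Prod.ext_iff.1 h.2, fun h =>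
      have he : coarsen (L * K) e = ij := Prod.ext h.1 h.2
      ⟨he ▸ hij, he⟩⟩

theorem sum_cells_childIdx {px py : ℕ → ℕ} (Hx : ExpandingNodes N K px)
    (Hy : ExpandingNodes N K py) (hL : 0 < L) (F : ℕ × ℕ → ℕ × ℕ → ℝ) :
    ∑ e ∈ cells (L * K * N), F e (coarsen (L * K) e) =
      ∑ ij ∈ cells N, ∑ c ∈ cells (L * N) with
        coarsen L c ∈ block K px ij.1 ×ˢ block K py ij.2,
          F (childIdx K px L ij.1 c.1, childIdx K py L ij.2 c.2) ij := by
  rw [← Finset.sum_fiberwise_of_maps_to fun e he =>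
    (coarsen_mem_cells_iff (Nat.mul_pos hL Hx.pos_K)).2 he]
  refine Finset.sum_congr rfl fun ij hij => Eq.symm ?_
  have hbij := bijOn_childIdx_cells Hx Hy hL hij
  rw [← Finset.coe_filter, ← Finset.coe_filter] at hbij
  exact Finset.sum_nbij _ hbij.mapsTo hbij.injOn hbij.surjOn fun c hc =>
    congrArg (F _) (Finset.mem_filter.1 (hbij.mapsTo hc)).2.symm

end Nodes

/-! ### The maps and functions of the setup -/

namespace Setup

variable {st : Setup} {ij c : ℕ × ℕ} {L : ℕ}

/-- The map `(u_{i+1}, v_{j+1})`. -/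
def U (st : Setup) (ij : ℕ × ℕ) (p : ℝ × ℝ) : ℝ × ℝ :=
  (usub st.N st.px (ij.1 + 1) p.1, usub st.N st.py (ij.2 + 1) p.2)

/-- The domain `D'_{i+1,j+1}` of `(u_{i+1}, v_{j+1})`. -/
def dom (st : Setup) (ij : ℕ × ℕ) : Set (ℝ × ℝ) := Dij' st.N st.px st.py (ij.1 + 1) (ij.2 + 1)

/-- The indices of the grid cells that make up `D'_{i+1,j+1}`. -/
def blocks (st : Setup) (ij : ℕ × ℕ) : Finset (ℕ × ℕ) :=
  block st.K st.px ij.1 ×ˢ block st.K st.py ij.2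

/-- The index of the image under `(u_{i+1}, v_{j+1})` of a cell of the `L * N × L * N` grid. -/
def childCell (st : Setup) (L : ℕ) (ij : ℕ × ℕ) : ℕ × ℕ → ℕ × ℕ :=
  Prod.map (childIdx st.K st.px L ij.1) (childIdx st.K st.py L ij.2)

theorem pos_N (st : Setup) : 0 < st.N := two_pos.trans_le st.hN

theorem pos_K (st : Setup) : 0 < st.K := two_pos.trans_le st.hK

theorem expandingNodes_px (st : Setup) : ExpandingNodes st.N st.K st.px :=
  expandingNodes_of_abs_sub st.pos_N st.pos_K st.hpx st.hKx

theorem expandingNodes_py (st : Setup) : ExpandingNodes st.N st.K st.py :=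
  expandingNodes_of_abs_sub st.pos_N st.pos_K st.hpy st.hKy

theorem U_rectPoint (st : Setup) (ij : ℕ × ℕ) (P Q σ : ℝ × ℝ) :
    st.U ij (rectPoint P Q σ) = rectPoint (st.U ij P) (st.U ij Q) σ :=
  Prod.ext (usub_lineMap ..) (usub_lineMap ..)

theorem U_image_dom (hij : ij ∈ cells st.N) : st.U ij '' st.dom ij = gridCell st.N ij := by
  obtain ⟨hi, hj⟩ := mem_cells.1 hij
  rw [gridCell, ← st.expandingNodes_px.usub_image_Ii' hi, ← st.expandingNodes_py.usub_image_Ii' hj,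
    ← prodMap_image_prod]
  rfl

theorem U_mem (hij : ij ∈ cells st.N) {p : ℝ × ℝ} (hp : p ∈ st.dom ij) :
    st.U ij p ∈ gridCell st.N ij :=
  U_image_dom hij ▸ mem_image_of_mem _ hp

theorem U_image_gridCell (hL : 0 < L) (hij : ij ∈ cells st.N) (hc : coarsen L c ∈ st.blocks ij) :
    st.U ij '' gridCell (L * st.N) c = gridCell (L * st.K * st.N) (st.childCell L ij c) := by
  obtain ⟨hi, hj⟩ := mem_cells.1 hij
  obtain ⟨hci, hcj⟩ := Finset.mem_product.1 hc
  simp only [gridCell, childCell, Prod.map_fst, Prod.map_snd,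
    ← st.expandingNodes_px.usub_image_gridIcc hL hi hci,
    ← st.expandingNodes_py.usub_image_gridIcc hL hj hcj, ← prodMap_image_prod]
  rfl

theorem dom_eq (hij : ij ∈ cells st.N) :
    st.dom ij = rect st.N st.K (blockStart st.px ij.1) (blockStart st.py ij.2) := by
  obtain ⟨hi, hj⟩ := mem_cells.1 hij
  rw [dom, Dij', st.expandingNodes_px.Ii'_eq hi, st.expandingNodes_py.Ii'_eq hj, rect]

theorem dom_subset_sq (hij : ij ∈ cells st.N) : st.dom ij ⊆ sq := by
  obtain ⟨hi, hj⟩ := mem_cells.1 hij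
  have := st.expandingNodes_px.blockStart_add_le hi
  have := st.expandingNodes_py.blockStart_add_le hj
  rw [dom_eq hij]
  exact prod_mono (Icc_subset_Icc (xg_mem_Icc (by lia)).1 (xg_mem_Icc (by lia)).2)
    (Icc_subset_Icc (xg_mem_Icc (by lia)).1 (xg_mem_Icc (by lia)).2)

theorem blocks_subset (hij : ij ∈ cells st.N) : st.blocks ij ⊆ cells st.N := fun c hc => by
  obtain ⟨hi, hj⟩ := mem_cells.1 hij
  obtain ⟨hci, hcj⟩ := Finset.mem_product.1 hc
  exact mem_cells.2 ⟨st.expandingNodes_px.lt_of_mem_block hi hci,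
    st.expandingNodes_py.lt_of_mem_block hj hcj⟩

theorem gridCell_subset_dom (hij : ij ∈ cells st.N) (hc : c ∈ st.blocks ij) :
    gridCell st.N c ⊆ st.dom ij := by
  obtain ⟨hi, hj⟩ := mem_cells.1 hij
  obtain ⟨hci, hcj⟩ := Finset.mem_product.1 hc
  exact prod_mono (st.expandingNodes_px.gridIcc_subset_Ii' hi hci)
    (st.expandingNodes_py.gridIcc_subset_Ii' hj hcj)

theorem exists_mem_blocks_of_mem_dom (hij : ij ∈ cells st.N) {p : ℝ × ℝ} (hp : p ∈ st.dom ij) :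
    ∃ c ∈ st.blocks ij, p ∈ gridCell st.N c := by
  rw [dom_eq hij] at hp
  obtain ⟨a, ha, hpa⟩ := exists_mem_gridIcc_of_mem_Icc (Nat.lt_add_of_pos_right st.pos_K) hp.1
  obtain ⟨b, hb, hpb⟩ := exists_mem_gridIcc_of_mem_Icc (Nat.lt_add_of_pos_right st.pos_K) hp.2
  exact ⟨(a, b), Finset.mem_product.2 ⟨ha, hb⟩, hpa, hpb⟩

theorem mem_blocks_of_cellMid_mem (hij : ij ∈ cells st.N) (h : cellMid st.N c ∈ st.dom ij) :
    c ∈ st.blocks ij := by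
  obtain ⟨hi, hj⟩ := mem_cells.1 hij
  exact Finset.mem_product.2 ⟨st.expandingNodes_px.mem_block_of_gridMid_mem hi h.1,
    st.expandingNodes_py.mem_block_of_gridMid_mem hj h.2⟩

theorem cellMid_mem_interior_dom (hij : ij ∈ cells st.N) (hc : c ∈ st.blocks ij) :
    cellMid st.N c ∈ interior (st.dom ij) :=
  interior_mono (gridCell_subset_dom hij hc) (cellMid_mem_interior st.pos_N c)

theorem dom_eq_of_mem_blocks {kl : ℕ × ℕ} (hij : ij ∈ cells st.N) (hkl : kl ∈ cells st.N)
    (hc : c ∈ st.blocks ij) (hc' : c ∈ st.blocks kl) : st.dom ij = st.dom kl := by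
  obtain ⟨hi, hj⟩ := mem_cells.1 hij
  obtain ⟨hk, hl⟩ := mem_cells.1 hkl
  refine (st.hdisj (ij.1 + 1) (ij.2 + 1) (kl.1 + 1) (kl.2 + 1) (by lia) hi (by lia) hj (by lia) hk
    (by lia) hl).resolve_right fun h => ?_
  exact eq_empty_iff_forall_notMem.1 h _
    ⟨cellMid_mem_interior_dom hij hc, cellMid_mem_interior_dom hkl hc'⟩

theorem isBilinearOn_S (hij : ij ∈ cells st.N) : IsBilinearOn st.S (gridCell st.N ij) :=
  let ⟨hi, hj⟩ := mem_cells.1 hij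
  st.hSbil (ij.1 + 1) (ij.2 + 1) (by lia) hi (by lia) hj

theorem isBilinearOn_h (hij : ij ∈ cells st.N) : IsBilinearOn st.h (gridCell st.N ij) :=
  let ⟨hi, hj⟩ := mem_cells.1 hij
  st.hhbil (ij.1 + 1) (ij.2 + 1) (by lia) hi (by lia) hj

theorem isBilinearOn_g (hij : ij ∈ cells st.N) :
    IsBilinearOn (st.g (ij.1 + 1) (ij.2 + 1)) (st.dom ij) :=
  let ⟨hi, hj⟩ := mem_cells.1 hij
  st.hgbil (ij.1 + 1) (ij.2 + 1) (by lia) hi (by lia) hj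

theorem f_U (hij : ij ∈ cells st.N) {p : ℝ × ℝ} (hp : p ∈ st.dom ij) :
    st.f (st.U ij p) =
      st.S (st.U ij p) * (st.f p - st.g (ij.1 + 1) (ij.2 + 1) p) + st.h (st.U ij p) :=
  let ⟨hi, hj⟩ := mem_cells.1 hij
  st.hfeq (ij.1 + 1) (ij.2 + 1) (by lia) hi (by lia) hj p hp

theorem isBilinearOn_comp_U {F : ℝ × ℝ → ℝ} (hij : ij ∈ cells st.N)
    (hF : IsBilinearOn F (gridCell st.N ij)) : IsBilinearOn (fun p => F (st.U ij p)) (st.dom ij) :=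
  (hF.comp_usub st.N st.px st.py (ij.1 + 1) (ij.2 + 1)).mono fun _ => U_mem hij

theorem S_mem_of_corners {C : Set ℝ} (hC : Convex ℝ C) (hij : ij ∈ cells st.N)
    (h₀₀ : st.s ij.1 ij.2 ∈ C) (h₁₀ : st.s (ij.1 + 1) ij.2 ∈ C) (h₀₁ : st.s ij.1 (ij.2 + 1) ∈ C)
    (h₁₁ : st.s (ij.1 + 1) (ij.2 + 1) ∈ C) {q : ℝ × ℝ} (hq : q ∈ gridCell st.N ij) :
    st.S q ∈ C := by
  obtain ⟨hi, hj⟩ := mem_cells.1 hij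
  rw [← st.hSval _ (by lia) _ (by lia)] at h₀₀ h₁₀ h₀₁ h₁₁
  have hS := isBilinearOn_S hij
  rw [gridCell_eq_uIcc] at hS hq
  exact hS.mem_of_corners hC h₀₀ h₁₀ h₀₁ h₁₁ hq

theorem abs_S_lt_one (hij : ij ∈ cells st.N) {q : ℝ × ℝ} (hq : q ∈ gridCell st.N ij) :
    |st.S q| < 1 := by
  obtain ⟨hi, hj⟩ := mem_cells.1 hij
  have hs : ∀ k ≤ st.N, ∀ l ≤ st.N, st.s k l ∈ Ioo (-1 : ℝ) 1 := fun k hk l hl =>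
    abs_lt.1 (st.hs k hk l hl)
  exact abs_lt.2 (S_mem_of_corners (convex_Ioo (-1) 1) hij (hs _ (by lia) _ (by lia))
    (hs _ (by lia) _ (by lia)) (hs _ (by lia) _ (by lia)) (hs _ (by lia) _ (by lia)) hq)

theorem exists_abs_S_eq_mul (hst : Steady st) (hij : ij ∈ cells st.N) :
    ∃ ε : ℝ, |ε| = 1 ∧ ∀ q ∈ gridCell st.N ij, |st.S q| = ε * st.S q := by
  obtain ⟨hi, hj⟩ := mem_cells.1 hij
  rcases hst (ij.1 + 1) (ij.2 + 1) (by lia) hi (by lia) hj with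
    ⟨h₀₀, h₀₁, h₁₀, h₁₁⟩ | ⟨h₀₀, h₀₁, h₁₀, h₁₁⟩
  · exact ⟨1, abs_one, fun q hq => (one_mul (st.S q)).symm ▸
      abs_of_nonneg (S_mem_of_corners (convex_Ici 0) hij h₀₀ h₁₀ h₀₁ h₁₁ hq)⟩
  · exact ⟨-1, by simp, fun q hq => (neg_one_mul (st.S q)).symm ▸
      abs_of_nonpos (S_mem_of_corners (convex_Iic 0) hij h₀₀ h₁₀ h₀₁ h₁₁ hq)⟩

theorem isBilinearOn_abs_S (hst : Steady st) (hij : ij ∈ cells st.N) :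
    IsBilinearOn (fun p => |st.S p|) (gridCell st.N ij) :=
  let ⟨ε, _, hε⟩ := exists_abs_S_eq_mul hst hij
  ((isBilinearOn_S hij).const_mul ε).congr hε

end Setup

/-! ### The transfer matrix -/

section Transfer

variable {st : Setup} {m : ℕ} {B : Fin m → Set (ℝ × ℝ)} {γ : Fin m → Fin m → ℝ}
  {cl : ℕ × ℕ → Fin m} {r t : Fin m} {c ij : ℕ × ℕ}

/-- `cl` assigns to each cell of the `N × N` grid the index of the member of `B` containing it. -/
def IsClassMap (st : Setup) (B : Fin m → Set (ℝ × ℝ)) (cl : ℕ × ℕ → Fin m) : Prop :=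
  ∀ ij ∈ cells st.N, ∀ r, gridCell st.N ij ⊆ B r ↔ cl ij = r

/-- The indices of the maps that send the cell `c` into a cell of class `r`. -/
def branches (st : Setup) (cl : ℕ × ℕ → Fin m) (r : Fin m) (c : ℕ × ℕ) : Finset (ℕ × ℕ) :=
  {ij ∈ cells st.N | cl ij = r ∧ c ∈ st.blocks ij}

/-- `γ` is the transfer matrix of the scaling factors with respect to the classes `cl`: at
every point of a cell, the absolute scaling factors of the maps into class `r` add up to `γ_{rt}`,
where `t` is the class of the cell. -/
structure IsTransferMatrix (st : Setup) (cl : ℕ × ℕ → Fin m) (γ : Fin m → Fin m → ℝ) : Prop where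
  nonneg : ∀ r t, 0 ≤ γ r t
  sum_abs_S : ∀ r, ∀ c ∈ cells st.N, ∀ p ∈ gridCell st.N c,
    ∑ ij ∈ branches st cl r c, |st.S (st.U ij p)| = γ r (cl c)

theorem exists_isClassMap (hpart : IsPartition m B) (hcomp : IsCompatible st B) :
    ∃ cl, IsClassMap st B cl := by
  have hcover : ∀ ij ∈ cells st.N, ∃ r, gridCell st.N ij ⊆ B r := fun ij hij =>
    let ⟨hi, hj⟩ := mem_cells.1 hij
    (hcomp.1 (ij.1 + 1) (ij.2 + 1) (by lia) hi (by lia) hj).1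
  obtain ⟨r₀, -⟩ := hcover (0, 0) (mem_cells.2 ⟨st.pos_N, st.pos_N⟩)
  have : Nonempty (Fin m) := ⟨r₀⟩
  choose! cl hcl using hcover
  refine ⟨cl, fun ij hij r => ⟨fun h => ?_, fun h => h ▸ hcl ij hij⟩⟩
  by_contra hne
  have hmid := cellMid_mem_interior st.pos_N ij
  exact eq_empty_iff_forall_notMem.1 (hpart.2.2 _ _ hne) _
    ⟨interior_mono (hcl ij hij) hmid, interior_mono h hmid⟩

theorem mem_branches : ij ∈ branches st cl r c ↔
    ij ∈ cells st.N ∧ cl ij = r ∧ c ∈ st.blocks ij :=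
  Finset.mem_filter

theorem succ_mem_Lam : (ij.1 + 1, ij.2 + 1) ∈ Lam st B r ↔
    ij ∈ cells st.N ∧ gridCell st.N ij ⊆ B r := by
  simp only [Lam, idxS, Finset.mem_filter, Finset.mem_product, Finset.mem_Icc, mem_cells]
  exact and_congr_left' (by lia)

theorem succ_mem_Lam' : (ij.1 + 1, ij.2 + 1) ∈ Lam' st B r ↔
    ij ∈ cells st.N ∧ st.dom ij ⊆ B r := by
  simp only [Lam', idxS, Finset.mem_filter, Finset.mem_product, Finset.mem_Icc, mem_cells]
  exact and_congr_left' (by lia)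

theorem exists_eq_succ_of_mem_Lam {kl : ℕ × ℕ} (h : kl ∈ Lam st B r) :
    ∃ ij : ℕ × ℕ, kl = (ij.1 + 1, ij.2 + 1) := by
  simp only [Lam, idxS, Finset.mem_filter, Finset.mem_product, Finset.mem_Icc] at h
  exact ⟨(kl.1 - 1, kl.2 - 1), Prod.ext (by lia) (by lia)⟩

theorem succ_mem_LamAB {kl : ℕ × ℕ} (hkl : kl ∈ cells st.N) :
    (ij.1 + 1, ij.2 + 1) ∈ LamAB st B r (blockStart st.px kl.1) (blockStart st.py kl.2) ↔
      (ij ∈ cells st.N ∧ gridCell st.N ij ⊆ B r) ∧ st.dom ij = st.dom kl := by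
  rw [LamAB, Finset.mem_filter, succ_mem_Lam, Setup.dom_eq hkl, Setup.dom]

theorem gamma_eq_cSum (hus : HasUniformSums st B γ)
    (h : (ij.1 + 1, ij.2 + 1) ∈ Lam st B r ∩ Lam' st B t) :
    cSum st B r (blockStart st.px ij.1) (blockStart st.py ij.2) (blockStart st.px ij.1)
        (blockStart st.py ij.2) = γ r t ∧
      cSum st B r (blockStart st.px ij.1) (blockStart st.py ij.2) (blockStart st.px ij.1 + st.K)
        (blockStart st.py ij.2) = γ r t ∧
      cSum st B r (blockStart st.px ij.1) (blockStart st.py ij.2) (blockStart st.px ij.1)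
        (blockStart st.py ij.2 + st.K) = γ r t ∧
      cSum st B r (blockStart st.px ij.1) (blockStart st.py ij.2) (blockStart st.px ij.1 + st.K)
        (blockStart st.py ij.2 + st.K) = γ r t := by
  have hij := (succ_mem_Lam.1 (Finset.mem_inter.1 h).1).1
  obtain ⟨hi, hj⟩ := mem_cells.1 hij
  exact hus r t ⟨_, h⟩ _ _ (st.expandingNodes_px.blockStart_add_le hi)
    (st.expandingNodes_py.blockStart_add_le hj) ⟨_, h, Setup.dom_eq hij⟩

theorem gamma_nonneg (hus : HasUniformSums st B γ) (hγ : GammaZero st B γ) (r t : Fin m) :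
    0 ≤ γ r t := by
  rcases (Lam st B r ∩ Lam' st B t).eq_empty_or_nonempty with h | ⟨kl, hkl⟩
  · exact (hγ r t h).ge
  · obtain ⟨ij, rfl⟩ := exists_eq_succ_of_mem_Lam (Finset.mem_inter.1 hkl).1
    exact (gamma_eq_cSum hus hkl).1 ▸ Finset.sum_nonneg fun _ _ => abs_nonneg _

-- Steadiness makes `|S|` bilinear on each cell, so the sum is determined by its corner values.
theorem sum_LamAB_abs_S (hst : Steady st) (hus : HasUniformSums st B γ)
    (h : (ij.1 + 1, ij.2 + 1) ∈ Lam st B r ∩ Lam' st B t) {p : ℝ × ℝ} (hp : p ∈ st.dom ij) :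
    ∑ kl ∈ LamAB st B r (blockStart st.px ij.1) (blockStart st.py ij.2),
      |st.S (usub st.N st.px kl.1 p.1, usub st.N st.py kl.2 p.2)| = γ r t := by
  have hij := (succ_mem_Lam.1 (Finset.mem_inter.1 h).1).1
  have hbil : IsBilinearOn (fun p : ℝ × ℝ =>
      ∑ kl ∈ LamAB st B r (blockStart st.px ij.1) (blockStart st.py ij.2),
        |st.S (usub st.N st.px kl.1 p.1, usub st.N st.py kl.2 p.2)|) (st.dom ij) := by
    refine IsBilinearOn.sum fun kl hkl => ?_
    obtain ⟨kl, rfl⟩ := exists_eq_succ_of_mem_Lam (Finset.mem_filter.1 hkl).1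
    obtain ⟨⟨hkl, -⟩, hdom⟩ := (succ_mem_LamAB hij).1 hkl
    exact hdom ▸ Setup.isBilinearOn_comp_U hkl (Setup.isBilinearOn_abs_S hst hkl)
  obtain ⟨h₀₀, h₁₀, h₀₁, h₁₁⟩ := gamma_eq_cSum hus h
  rw [Setup.dom_eq hij, rect, ← uIcc_of_le (monotone_xg st.N (Nat.le_add_right _ _)),
    ← uIcc_of_le (monotone_xg st.N (Nat.le_add_right _ _))] at hbil hp
  exact hbil.eq_of_corners (P := (_, _)) (Q := (_, _)) (isBilinearOn_const (γ r t) _)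
    h₀₀ h₁₀ h₀₁ h₁₁ hp

theorem exists_mem_branches (hcomp : IsCompatible st B) (hcl : IsClassMap st B cl)
    (hc : c ∈ cells st.N) (h : (Lam st B r ∩ Lam' st B (cl c)).Nonempty) :
    ∃ ij ∈ branches st cl r c, (ij.1 + 1, ij.2 + 1) ∈ Lam st B r ∩ Lam' st B (cl c) := by
  obtain ⟨kl, hkl⟩ := h
  obtain ⟨ij, rfl⟩ := exists_eq_succ_of_mem_Lam (Finset.mem_inter.1 hkl).1
  obtain ⟨h1, h2⟩ := Finset.mem_inter.1 hkl
  obtain ⟨hij, hr⟩ := succ_mem_Lam.1 h1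
  obtain ⟨hi, hj⟩ := mem_cells.1 hij
  have hB := hcomp.2 r (cl c)
    ⟨ij.1 + 1, ij.2 + 1, by lia, hi, by lia, hj, hr, (succ_mem_Lam'.1 h2).2⟩
  have hmid : cellMid st.N c ∈ B (cl c) :=
    (hcl c hc _).2 rfl (interior_subset (cellMid_mem_interior st.pos_N c))
  rw [hB] at hmid
  simp only [mem_iUnion] at hmid
  obtain ⟨k, l, ⟨hk1, hk, hl1, hl, hkr, hkt⟩, hmid⟩ := hmid
  obtain ⟨k, rfl⟩ := Nat.exists_eq_add_of_le' hk1
  obtain ⟨l, rfl⟩ := Nat.exists_eq_add_of_le' hl1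
  have hkl : (k, l) ∈ cells st.N := mem_cells.2 ⟨hk, hl⟩
  exact ⟨(k, l),
    mem_branches.2 ⟨hkl, (hcl _ hkl r).1 hkr, Setup.mem_blocks_of_cellMid_mem hkl hmid⟩,
    Finset.mem_inter.2 ⟨succ_mem_Lam.2 ⟨hkl, hkr⟩, succ_mem_Lam'.2 ⟨hkl, hkt⟩⟩⟩

theorem succ_mem_inter_of_mem_branches (hcomp : IsCompatible st B) (hcl : IsClassMap st B cl)
    (hc : c ∈ cells st.N) (h : ij ∈ branches st cl r c) :
    (ij.1 + 1, ij.2 + 1) ∈ Lam st B r ∩ Lam' st B (cl c) := by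
  obtain ⟨hij, hr, hcij⟩ := mem_branches.1 h
  obtain ⟨hi, hj⟩ := mem_cells.1 hij
  obtain ⟨-, t, ht⟩ := hcomp.1 (ij.1 + 1) (ij.2 + 1) (by lia) hi (by lia) hj
  have hct := (hcl c hc t).1 ((Setup.gridCell_subset_dom hij hcij).trans ht)
  exact Finset.mem_inter.2 ⟨succ_mem_Lam.2 ⟨hij, (hcl ij hij r).2 hr⟩,
    succ_mem_Lam'.2 ⟨hij, hct ▸ ht⟩⟩

theorem sum_branches_eq_sum_LamAB (hcl : IsClassMap st B cl) (hij : ij ∈ branches st cl r c)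
    (F : ℕ × ℕ → ℝ) : ∑ kl ∈ branches st cl r c, F (kl.1 + 1, kl.2 + 1) =
      ∑ kl ∈ LamAB st B r (blockStart st.px ij.1) (blockStart st.py ij.2), F kl := by
  obtain ⟨hijN, -, hcij⟩ := mem_branches.1 hij
  refine Finset.sum_bij (fun kl _ => (kl.1 + 1, kl.2 + 1)) ?_ ?_ ?_ fun _ _ => rfl
  · intro kl hkl
    obtain ⟨hkl, hr, hckl⟩ := mem_branches.1 hkl
    exact (succ_mem_LamAB hijN).2
      ⟨⟨hkl, (hcl kl hkl r).2 hr⟩, Setup.dom_eq_of_mem_blocks hkl hijN hckl hcij⟩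
  · exact fun a _ b _ hab => by simpa [Prod.ext_iff] using hab
  · intro kl hkl
    obtain ⟨kl, rfl⟩ := exists_eq_succ_of_mem_Lam (Finset.mem_filter.1 hkl).1
    obtain ⟨⟨hkl, hr⟩, hdom⟩ := (succ_mem_LamAB hijN).1 hkl
    refine ⟨kl, mem_branches.2 ⟨hkl, (hcl kl hkl r).1 hr, Setup.mem_blocks_of_cellMid_mem hkl ?_⟩,
      rfl⟩
    exact hdom ▸ interior_subset (Setup.cellMid_mem_interior_dom hijN hcij)

theorem isTransferMatrix (hcomp : IsCompatible st B) (hst : Steady st)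
    (hus : HasUniformSums st B γ) (hγ : GammaZero st B γ) (hcl : IsClassMap st B cl) :
    IsTransferMatrix st cl γ where
  nonneg := gamma_nonneg hus hγ
  sum_abs_S r c hc p hp := by
    rcases (Lam st B r ∩ Lam' st B (cl c)).eq_empty_or_nonempty with h | h
    · rw [hγ r _ h]
      refine Finset.sum_eq_zero fun ij hij => absurd ?_ (Finset.notMem_empty (ij.1 + 1, ij.2 + 1))
      exact h ▸ succ_mem_inter_of_mem_branches hcomp hcl hc hij
    · obtain ⟨ij, hij, hmem⟩ := exists_mem_branches hcomp hcl hc h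
      obtain ⟨hijN, -, hcij⟩ := mem_branches.1 hij
      exact (sum_branches_eq_sum_LamAB hcl hij fun kl =>
        |st.S (usub st.N st.px kl.1 p.1, usub st.N st.py kl.2 p.2)|).trans
        (sum_LamAB_abs_S hst hus hmem (Setup.gridCell_subset_dom hijN hcij hp))

end Transfer

/-! ### Oscillations -/

section Oscillation

variable {f : ℝ × ℝ → ℝ} {E E' : Set (ℝ × ℝ)} {L M : ℕ}

/-- The Riemann-type sum `∑ O(f, D)` of oscillations over the cells `D` of the `M × M` grid. -/
def totalOsc (f : ℝ × ℝ → ℝ) (M : ℕ) : ℝ := ∑ c ∈ cells M, Osc f (gridCell M c)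

theorem abs_sub_le_Osc (hf : Bornology.IsBounded (f '' E)) {p q : ℝ × ℝ} (hp : p ∈ E)
    (hq : q ∈ E) : |f p - f q| ≤ Osc f E := by
  obtain ⟨C, hC⟩ := Metric.isBounded_iff.1 hf
  have hbdd : BddAbove {d : ℝ | ∃ p ∈ E, ∃ q ∈ E, d = f p - f q} := ⟨C, by
    rintro _ ⟨p, hp, q, hq, rfl⟩
    exact (le_abs_self _).trans (hC (mem_image_of_mem f hp) (mem_image_of_mem f hq))⟩
  exact abs_le'.2 ⟨le_csSup hbdd ⟨p, hp, q, hq, rfl⟩,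
    le_csSup hbdd ⟨q, hq, p, hp, neg_sub _ _⟩⟩

theorem Osc_le {C : ℝ} (hC : 0 ≤ C) (h : ∀ p ∈ E, ∀ q ∈ E, f p - f q ≤ C) : Osc f E ≤ C :=
  Real.sSup_le (by rintro _ ⟨p, hp, q, hq, rfl⟩; exact h p hp q hq) hC

theorem Osc_nonneg (f : ℝ × ℝ → ℝ) (E : Set (ℝ × ℝ)) : 0 ≤ Osc f E := by
  rcases E.eq_empty_or_nonempty with rfl | ⟨p, hp⟩
  · simp [Osc]
  · exact Real.sSup_nonneg' ⟨0, ⟨p, hp, p, hp, (sub_self _).symm⟩, le_rfl⟩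

theorem Osc_mono (hf : Bornology.IsBounded (f '' E')) (h : E ⊆ E') : Osc f E ≤ Osc f E' :=
  Osc_le (Osc_nonneg f E') fun _ hp _ hq =>
    (le_abs_self _).trans (abs_sub_le_Osc hf (h hp) (h hq))

theorem isBounded_image_gridCell (hf : Bornology.IsBounded (f '' sq)) {c : ℕ × ℕ}
    (hc : c ∈ cells M) : Bornology.IsBounded (f '' gridCell M c) :=
  hf.subset (image_mono (gridCell_subset_sq hc))

theorem card_filter_coarsen_eq (hL : 0 < L) (c : ℕ × ℕ) (hc : c ∈ cells M) :
    ({e ∈ cells (L * M) | coarsen L e = c} : Finset (ℕ × ℕ)).card = L ^ 2 := by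
  have hset : ({e ∈ cells (L * M) | coarsen L e = c} : Finset (ℕ × ℕ)) =
      Finset.Ico (c.1 * L) (c.1 * L + L) ×ˢ Finset.Ico (c.2 * L) (c.2 * L + L) := by
    ext e
    rw [Finset.mem_filter, ← coarsen_mem_cells_iff hL, and_iff_right_of_imp (· ▸ hc), Prod.ext_iff,
      coarsen, Nat.div_eq_iff hL, Nat.div_eq_iff hL, Finset.mem_product, Finset.mem_Ico,
      Finset.mem_Ico]
    lia
  rw [hset, Finset.card_product, Nat.card_Ico, Nat.card_Ico, Nat.add_sub_cancel_left,
    Nat.add_sub_cancel_left, pow_two]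

theorem totalOsc_mul_le (hf : Bornology.IsBounded (f '' sq)) (hL : 0 < L) (M : ℕ) :
    totalOsc f (L * M) ≤ L ^ 2 * totalOsc f M := calc
  totalOsc f (L * M) ≤ ∑ e ∈ cells (L * M), Osc f (gridCell M (coarsen L e)) :=
    Finset.sum_le_sum fun e he => Osc_mono
      (isBounded_image_gridCell hf ((coarsen_mem_cells_iff hL).2 he))
      (gridCell_subset_coarsen hL M e)
  _ = ∑ c ∈ cells M, ∑ e ∈ cells (L * M) with coarsen L e = c, Osc f (gridCell M c) :=
    (Finset.sum_fiberwise_of_maps_to' (fun e he => (coarsen_mem_cells_iff hL).2 he)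
      fun c => Osc f (gridCell M c)).symm
  _ = L ^ 2 * totalOsc f M := by
    rw [totalOsc, Finset.mul_sum]
    refine Finset.sum_congr rfl fun c hc => ?_
    rw [Finset.sum_const, card_filter_coarsen_eq hL c hc, nsmul_eq_mul, Nat.cast_pow]

end Oscillation

/-! ### The oscillation recurrence -/

section ClassSum

variable {st : Setup} {m : ℕ} {γ : Fin m → Fin m → ℝ} {cl : ℕ × ℕ → Fin m} {L : ℕ}

/-- The sum of `Q` over those cells of the `L * N × L * N` grid that lie in a cell of class `r`
of the `N × N` grid. -/
def classSum (L N : ℕ) (cl : ℕ × ℕ → Fin m) (Q : ℕ × ℕ → ℝ) (r : Fin m) : ℝ :=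
  ∑ c ∈ cells (L * N) with cl (coarsen L c) = r, Q c

theorem classSum_nonneg {Q : ℕ × ℕ → ℝ} (hQ : ∀ c, 0 ≤ Q c) (L N : ℕ) (cl : ℕ × ℕ → Fin m)
    (r : Fin m) : 0 ≤ classSum L N cl Q r :=
  Finset.sum_nonneg fun c _ => hQ c

theorem sum_classSum (L N : ℕ) (cl : ℕ × ℕ → Fin m) (Q : ℕ × ℕ → ℝ) :
    ∑ r, classSum L N cl Q r = ∑ c ∈ cells (L * N), Q c :=
  Finset.sum_fiberwise _ _ _

theorem sum_mul_classSum (w : Fin m → ℝ) (L N : ℕ) (cl : ℕ × ℕ → Fin m) (Q : ℕ × ℕ → ℝ) :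
    ∑ t, w t * classSum L N cl Q t = ∑ c ∈ cells (L * N), w (cl (coarsen L c)) * Q c := by
  rw [← Finset.sum_fiberwise (cells (L * N)) fun c => cl (coarsen L c)]
  refine Finset.sum_congr rfl fun t _ => ?_
  rw [classSum, Finset.mul_sum]
  exact Finset.sum_congr rfl fun c hc => by rw [(Finset.mem_filter.1 hc).2]

theorem classSum_mul_K (hL : 0 < L) (Q : ℕ × ℕ → ℝ) (r : Fin m) :
    classSum (L * st.K) st.N cl Q r =
      ∑ c ∈ cells (L * st.N), ∑ ij ∈ branches st cl r (coarsen L c), Q (st.childCell L ij c) := by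
  rw [classSum, Finset.sum_filter, sum_cells_childIdx st.expandingNodes_px st.expandingNodes_py hL
    fun e ij => if cl ij = r then Q e else 0]
  simp only [branches, Finset.sum_filter]
  rw [Finset.sum_comm]
  refine Finset.sum_congr rfl fun c _ => Finset.sum_congr rfl fun ij _ => ?_
  by_cases hr : cl ij = r
  · simp only [hr, if_true, true_and]
    rfl
  · simp only [hr, if_false, ite_self, false_and]

end ClassSum

theorem pair_eq_pair_of_uIcc_eq {a b c d : ℝ} (h : uIcc a b = uIcc c d) :
    ({a, b} : Set ℝ) = {c, d} := by
  obtain ⟨hmin, hmax⟩ := (Icc_eq_Icc_iff inf_le_sup).1 h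
  rcases le_total a b with hab | hab <;> rcases le_total c d with hcd | hcd <;>
    simp_all [pair_comm]

namespace Setup

variable {st : Setup} {ij kl : ℕ × ℕ}

/-- The grid point `(x'_i, y'_j)`, a corner of the domains `D'_{ij}` and `D'_{i+1,j+1}`. -/
def node (st : Setup) (ij : ℕ × ℕ) : ℝ × ℝ := (xp st.N st.px ij.1, xp st.N st.py ij.2)

theorem dom_eq_uIcc (st : Setup) (ij : ℕ × ℕ) : st.dom ij =
    uIcc (st.node ij).1 (st.node (ij.1 + 1, ij.2 + 1)).1 ×ˢ
      uIcc (st.node ij).2 (st.node (ij.1 + 1, ij.2 + 1)).2 :=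
  rfl

theorem g_eq_f_of_corner (hij : ij ∈ cells st.N) {q : ℝ × ℝ}
    (hq : q ∈ ({(st.node ij).1, (st.node (ij.1 + 1, ij.2 + 1)).1} : Set ℝ) ×ˢ
      ({(st.node ij).2, (st.node (ij.1 + 1, ij.2 + 1)).2} : Set ℝ)) :
    st.g (ij.1 + 1) (ij.2 + 1) q = st.f q := by
  obtain ⟨hi, hj⟩ := mem_cells.1 hij
  have key : ∀ k ∈ ({ij.1, ij.1 + 1} : Set ℕ), ∀ l ∈ ({ij.2, ij.2 + 1} : Set ℕ),
      st.g (ij.1 + 1) (ij.2 + 1) (st.node (k, l)) = st.f (st.node (k, l)) := fun k hk l hl => by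
    have hkN : k ≤ st.N := by rcases hk with rfl | rfl <;> lia
    have hlN : l ≤ st.N := by rcases hl with rfl | rfl <;> lia
    exact (st.hgval _ _ (by lia) hi (by lia) hj k hk l hl).trans
      (st.hfval _ (st.hpx k hkN) _ (st.hpy l hlN)).symm
  obtain ⟨x, y⟩ := q
  obtain ⟨rfl | rfl, rfl | rfl⟩ := hq
  · exact key ij.1 (by simp) ij.2 (by simp)
  · exact key ij.1 (by simp) (ij.2 + 1) (by simp)
  · exact key (ij.1 + 1) (by simp) ij.2 (by simp)
  · exact key (ij.1 + 1) (by simp) (ij.2 + 1) (by simp)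

theorem g_mem_of_corners {C : Set ℝ} (hC : Convex ℝ C) (hf : MapsTo st.f sq C)
    (hij : ij ∈ cells st.N) {p : ℝ × ℝ} (hp : p ∈ st.dom ij) :
    st.g (ij.1 + 1) (ij.2 + 1) p ∈ C := by
  have hcorner : ∀ x ∈ ({(st.node ij).1, (st.node (ij.1 + 1, ij.2 + 1)).1} : Set ℝ),
      ∀ y ∈ ({(st.node ij).2, (st.node (ij.1 + 1, ij.2 + 1)).2} : Set ℝ),
        st.g (ij.1 + 1) (ij.2 + 1) (x, y) ∈ C := fun x hx y hy => by
    rw [g_eq_f_of_corner hij ⟨hx, hy⟩]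
    refine hf (dom_subset_sq hij ⟨?_, ?_⟩)
    · rcases hx with rfl | rfl
      exacts [left_mem_uIcc, right_mem_uIcc]
    · rcases hy with rfl | rfl
      exacts [left_mem_uIcc, right_mem_uIcc]
  exact (isBilinearOn_g hij).mem_of_corners (P := st.node ij) (Q := st.node (ij.1 + 1, ij.2 + 1))
    hC (hcorner _ (.inl rfl) _ (.inl rfl)) (hcorner _ (.inr rfl) _ (.inl rfl))
    (hcorner _ (.inl rfl) _ (.inr rfl)) (hcorner _ (.inr rfl) _ (.inr rfl)) hp

theorem g_eqOn_of_dom_eq (hij : ij ∈ cells st.N) (hkl : kl ∈ cells st.N)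
    (h : st.dom ij = st.dom kl) :
    EqOn (st.g (ij.1 + 1) (ij.2 + 1)) (st.g (kl.1 + 1) (kl.2 + 1)) (st.dom ij) := by
  obtain ⟨hx, hy⟩ := (prod_eq_prod_iff_of_nonempty ⟨st.node ij, left_mem_uIcc, left_mem_uIcc⟩).1 h
  have hcorner : ∀ x ∈ ({(st.node ij).1, (st.node (ij.1 + 1, ij.2 + 1)).1} : Set ℝ),
      ∀ y ∈ ({(st.node ij).2, (st.node (ij.1 + 1, ij.2 + 1)).2} : Set ℝ),
        st.g (ij.1 + 1) (ij.2 + 1) (x, y) = st.g (kl.1 + 1) (kl.2 + 1) (x, y) :=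
    fun x hx' y hy' => (g_eq_f_of_corner hij ⟨hx', hy'⟩).trans (g_eq_f_of_corner hkl
      ⟨pair_eq_pair_of_uIcc_eq hx ▸ hx', pair_eq_pair_of_uIcc_eq hy ▸ hy'⟩).symm
  exact (isBilinearOn_g hij).eq_of_corners (P := st.node ij) (Q := st.node (ij.1 + 1, ij.2 + 1))
    (h ▸ isBilinearOn_g hkl :)
    (hcorner _ (.inl rfl) _ (.inl rfl)) (hcorner _ (.inr rfl) _ (.inl rfl))
    (hcorner _ (.inl rfl) _ (.inr rfl)) (hcorner _ (.inr rfl) _ (.inr rfl))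

end Setup

section OscRecurrence

variable {st : Setup} {m : ℕ} {γ : Fin m → Fin m → ℝ} {cl : ℕ × ℕ → Fin m}

theorem exists_lipschitzOnWith_of_forall {ι α β : Type*} [PseudoEMetricSpace α]
    [PseudoEMetricSpace β] {s : Finset ι} {F : ι → α → β} {E : ι → Set α}
    (h : ∀ i ∈ s, ∃ Λ, LipschitzOnWith Λ (F i) (E i)) :
    ∃ Λ, ∀ i ∈ s, LipschitzOnWith Λ (F i) (E i) := by
  choose! Λ hΛ using h
  exact ⟨s.sup Λ, fun i hi => (hΛ i hi).weaken (Finset.le_sup hi)⟩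

theorem isBounded_sq : Bornology.IsBounded sq :=
  (isCompact_Icc.prod isCompact_Icc).isBounded

theorem isBounded_image_sq {f : ℝ × ℝ → ℝ} (hf : ContinuousOn f sq) :
    Bornology.IsBounded (f '' sq) :=
  ((isCompact_Icc.prod isCompact_Icc).image_of_continuousOn hf).isBounded

theorem mul_sub_mul_le {a b s x y u v δ M : ℝ} (has : |a - s| ≤ δ) (hab : |a - b| ≤ δ)
    (huv : |u - v| ≤ δ) (ha : |a| ≤ 1) (hx : |x| ≤ M) (hy : |y| ≤ M) (hv : |v| ≤ M) :
    a * (x - u) - b * (y - v) ≤ |s| * |x - y| + (4 * M + 1) * δ := by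
  have hδ : 0 ≤ δ := (abs_nonneg _).trans has
  have h₁ : s * (x - y) ≤ |s| * |x - y| := abs_mul s _ ▸ le_abs_self _
  have h₂ : (a - s) * (x - y) ≤ δ * (2 * M) := (le_abs_self _).trans <| abs_mul (a - s) _ ▸
    mul_le_mul has ((abs_sub _ _).trans (by linarith)) (abs_nonneg _) hδ
  have h₃ : -a * (u - v) ≤ 1 * δ := (le_abs_self _).trans <| abs_mul (-a) _ ▸
    mul_le_mul ((abs_neg a).trans_le ha) huv (abs_nonneg _) zero_le_one
  have h₄ : (a - b) * (y - v) ≤ δ * (2 * M) := (le_abs_self _).trans <| abs_mul (a - b) _ ▸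
    mul_le_mul hab ((abs_sub _ _).trans (by linarith)) (abs_nonneg _) hδ
  linarith

namespace Setup

theorem exists_abs_f_le (st : Setup) : ∃ M, 0 ≤ M ∧ ∀ p ∈ sq, |st.f p| ≤ M := by
  obtain ⟨M, hM⟩ := (isCompact_Icc.prod isCompact_Icc).exists_bound_of_continuousOn st.hfcont
  have h0 : (0, 0) ∈ sq := ⟨left_mem_Icc.2 zero_le_one, left_mem_Icc.2 zero_le_one⟩
  exact ⟨M, (abs_nonneg _).trans (hM _ h0), hM⟩

theorem isBounded_image_f (st : Setup) : Bornology.IsBounded (st.f '' sq) :=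
  isBounded_image_sq st.hfcont

theorem exists_lipschitzOnWith (st : Setup) : ∃ Λ, ∀ ij ∈ cells st.N,
    LipschitzOnWith Λ st.S (gridCell st.N ij) ∧ LipschitzOnWith Λ st.h (gridCell st.N ij) ∧
      LipschitzOnWith Λ (st.g (ij.1 + 1) (ij.2 + 1)) (st.dom ij) := by
  have hcell : ∀ ij ∈ cells st.N, Bornology.IsBounded (gridCell st.N ij) := fun _ hij =>
    isBounded_sq.subset (gridCell_subset_sq hij)
  obtain ⟨Λ₁, hS⟩ := exists_lipschitzOnWith_of_forall fun ij (hij : ij ∈ cells st.N) =>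
    (isBilinearOn_S hij).exists_lipschitzOnWith (hcell ij hij)
  obtain ⟨Λ₂, hh⟩ := exists_lipschitzOnWith_of_forall fun ij (hij : ij ∈ cells st.N) =>
    (isBilinearOn_h hij).exists_lipschitzOnWith (hcell ij hij)
  obtain ⟨Λ₃, hg⟩ := exists_lipschitzOnWith_of_forall fun ij (hij : ij ∈ cells st.N) =>
    (isBilinearOn_g hij).exists_lipschitzOnWith (isBounded_sq.subset (dom_subset_sq hij))
  exact ⟨max Λ₁ (max Λ₂ Λ₃), fun ij hij => ⟨(hS ij hij).weaken (le_max_left _ _),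
    (hh ij hij).weaken ((le_max_left _ _).trans (le_max_right _ _)),
    (hg ij hij).weaken ((le_max_right _ _).trans (le_max_right _ _))⟩⟩

theorem dist_U_le {ij c : ℕ × ℕ} {L : ℕ} (hL : 0 < L) (hij : ij ∈ cells st.N)
    (hc : coarsen L c ∈ st.blocks ij) {p q : ℝ × ℝ} (hp : p ∈ gridCell (L * st.N) c)
    (hq : q ∈ gridCell (L * st.N) c) : dist (st.U ij p) (st.U ij q) ≤ 1 / L := by
  have hmem : ∀ p ∈ gridCell (L * st.N) c,
      st.U ij p ∈ gridCell (L * st.K * st.N) (st.childCell L ij c) := fun p hp =>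
    U_image_gridCell hL hij hc ▸ mem_image_of_mem _ hp
  refine (dist_le_of_mem_gridCell (hmem p hp) (hmem q hq)).trans
    (one_div_le_one_div_of_le (Nat.cast_pos.2 hL) (Nat.cast_le.2 ?_))
  rw [Nat.mul_assoc]
  exact Nat.le_mul_of_pos_right L (Nat.mul_pos st.pos_K st.pos_N)

theorem exists_f_U_sub_le (st : Setup) : ∃ C, 0 ≤ C ∧ ∀ L, 0 < L → ∀ ij ∈ cells st.N, ∀ c,
    coarsen L c ∈ st.blocks ij → ∀ p ∈ gridCell (L * st.N) c, ∀ q ∈ gridCell (L * st.N) c,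
      ∀ p₀ ∈ gridCell (L * st.N) c, st.f (st.U ij p) - st.f (st.U ij q) ≤
        |st.S (st.U ij p₀)| * |st.f p - st.f q| + C / L := by
  obtain ⟨M, hM, hfM⟩ := st.exists_abs_f_le
  obtain ⟨Λ, hΛ⟩ := st.exists_lipschitzOnWith
  refine ⟨(4 * M + 1) * Λ + Λ, by positivity, fun L hL ij hij c hc p hp q hq p₀ hp₀ => ?_⟩
  obtain ⟨hS, hh, hg⟩ := hΛ ij hij
  have hsub : gridCell (L * st.N) c ⊆ st.dom ij :=
    (gridCell_subset_coarsen hL _ c).trans (gridCell_subset_dom hij hc)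
  have hfp : ∀ p ∈ gridCell (L * st.N) c, |st.f p| ≤ M := fun p hp =>
    hfM p (dom_subset_sq hij (hsub hp))
  have hgq : |st.g (ij.1 + 1) (ij.2 + 1) q| ≤ M := abs_le.2 <|
    g_mem_of_corners (convex_Icc (-M) M) (fun p hp => abs_le.1 (hfM p hp)) hij (hsub hq)
  have hdist : dist p q ≤ 1 / L := (dist_le_of_mem_gridCell hp hq).trans <|
    one_div_le_one_div_of_le (Nat.cast_pos.2 hL)
      (Nat.cast_le.2 (Nat.le_mul_of_pos_right L st.pos_N))
  have hLip : ∀ {F : ℝ × ℝ → ℝ} {E : Set (ℝ × ℝ)}, LipschitzOnWith Λ F E → ∀ x ∈ E, ∀ y ∈ E,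
      dist x y ≤ 1 / L → |F x - F y| ≤ Λ * (1 / L) := fun hF x hx y hy hxy =>
    (hF.dist_le_mul x hx y hy).trans (by gcongr)
  have hU : ∀ x ∈ gridCell (L * st.N) c, st.U ij x ∈ gridCell st.N ij := fun x hx =>
    U_mem hij (hsub hx)
  have hcore := mul_sub_mul_le (s := st.S (st.U ij p₀))
    (hLip hS _ (hU p hp) _ (hU p₀ hp₀) (dist_U_le hL hij hc hp hp₀))
    (hLip hS _ (hU p hp) _ (hU q hq) (dist_U_le hL hij hc hp hq))
    (hLip hg _ (hsub hp) _ (hsub hq) hdist) (abs_S_lt_one hij (hU p hp)).le (hfp p hp) (hfp q hq)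
    hgq
  have hhpq := (le_abs_self _).trans
    (hLip hh _ (hU p hp) _ (hU q hq) (dist_U_le hL hij hc hp hq))
  rw [f_U hij (hsub hp), f_U hij (hsub hq)]
  linear_combination hcore + hhpq

theorem exists_Osc_childCell_le (st : Setup) : ∃ C, 0 ≤ C ∧ ∀ L, 0 < L → ∀ ij ∈ cells st.N, ∀ c,
    coarsen L c ∈ st.blocks ij → ∀ p₀ ∈ gridCell (L * st.N) c,
      Osc st.f (gridCell (L * st.K * st.N) (st.childCell L ij c)) ≤
        |st.S (st.U ij p₀)| * Osc st.f (gridCell (L * st.N) c) + C / L := by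
  obtain ⟨C, hC, hstep⟩ := st.exists_f_U_sub_le
  refine ⟨C, hC, fun L hL ij hij c hc p₀ hp₀ => Osc_le
    (add_nonneg (mul_nonneg (abs_nonneg _) (Osc_nonneg _ _)) (by positivity)) ?_⟩
  rw [← U_image_gridCell hL hij hc]
  rintro _ ⟨p, hp, rfl⟩ _ ⟨q, hq, rfl⟩
  refine (hstep L hL ij hij c hc p hp q hq p₀ hp₀).trans ?_
  have hsub : gridCell (L * st.N) c ⊆ sq :=
    (gridCell_subset_coarsen hL _ c).trans ((gridCell_subset_dom hij hc).trans (dom_subset_sq hij))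
  gcongr
  exact abs_sub_le_Osc (st.isBounded_image_f.subset (image_mono hsub)) hp hq

end Setup

theorem card_branches_le (st : Setup) (cl : ℕ × ℕ → Fin m) (r : Fin m) (c : ℕ × ℕ) :
    (branches st cl r c).card ≤ st.N ^ 2 :=
  (Finset.card_filter_le _ _).trans_eq (card_cells st.N)

theorem exists_classSum_Osc_le (hγ : IsTransferMatrix st cl γ) : ∃ C, 0 ≤ C ∧ ∀ L, 0 < L → ∀ r,
    classSum (L * st.K) st.N cl (fun c => Osc st.f (gridCell (L * st.K * st.N) c)) r ≤
      ∑ t, γ r t * classSum L st.N cl (fun c => Osc st.f (gridCell (L * st.N) c)) t + C * L := by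
  obtain ⟨C, hC, hstep⟩ := st.exists_Osc_childCell_le
  refine ⟨st.N ^ 4 * C, by positivity, fun L hL r => ?_⟩
  have hcell : ∀ c ∈ cells (L * st.N), ∑ ij ∈ branches st cl r (coarsen L c),
      Osc st.f (gridCell (L * st.K * st.N) (st.childCell L ij c)) ≤
        γ r (cl (coarsen L c)) * Osc st.f (gridCell (L * st.N) c) + st.N ^ 2 * (C / L) := by
    intro c hc
    have hp₀ := lowerCorner_mem (L * st.N) c
    refine (Finset.sum_le_sum fun ij hij =>
      let ⟨hij, _, hcij⟩ := mem_branches.1 hij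
      hstep L hL ij hij c hcij _ hp₀).trans ?_
    rw [Finset.sum_add_distrib, ← Finset.sum_mul, hγ.sum_abs_S r _
      ((coarsen_mem_cells_iff hL).2 hc) _ (gridCell_subset_coarsen hL _ c hp₀),
      Finset.sum_const, nsmul_eq_mul]
    gcongr
    exact_mod_cast card_branches_le st cl r _
  rw [classSum_mul_K hL, sum_mul_classSum]
  refine (Finset.sum_le_sum hcell).trans_eq ?_
  rw [Finset.sum_add_distrib, Finset.sum_const, card_cells, nsmul_eq_mul]
  have : (L : ℝ) ≠ 0 := by exact_mod_cast hL.ne'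
  push_cast
  field_simp

end OscRecurrence

/-! ### The deviation recurrence -/

section Deviation

variable {F G : ℝ × ℝ → ℝ} {X Y : Set ℝ} {P Q σ : ℝ × ℝ}

/-- The error at relative coordinates `σ` of bilinear interpolation from the corners of the
rectangle with opposite corners `P` and `Q`, as a functional of the interpolated function. -/
def interpErr (P Q σ : ℝ × ℝ) : (ℝ × ℝ → ℝ) →ₗ[ℝ] ℝ where
  toFun F := F (rectPoint P Q σ) - bilerp F P Q σ
  map_add' F G := by
    simp only [Pi.add_apply, bilerp_eq]
    ring
  map_smul' a F := by
    simp only [Pi.smul_apply, smul_eq_mul, bilerp_eq, RingHom.id_apply]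
    ring

theorem interpErr_apply (P Q σ : ℝ × ℝ) (F : ℝ × ℝ → ℝ) :
    interpErr P Q σ F = F (rectPoint P Q σ) - bilerp F P Q σ :=
  rfl

theorem interpErr_congr (hX : Convex ℝ X) (hY : Convex ℝ Y) (hP : P ∈ X ×ˢ Y) (hQ : Q ∈ X ×ˢ Y)
    (hσ : σ ∈ sq) (h : EqOn F G (X ×ˢ Y)) : interpErr P Q σ F = interpErr P Q σ G := by
  rw [interpErr_apply, interpErr_apply, h (rectPoint_mem hX hY hP hQ hσ), bilerp_congr hP hQ h]

theorem IsBilinearOn.interpErr_eq_zero (hF : IsBilinearOn F (X ×ˢ Y)) (hX : Convex ℝ X)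
    (hY : Convex ℝ Y) (hP : P ∈ X ×ˢ Y) (hQ : Q ∈ X ×ˢ Y) (hσ : σ ∈ sq) :
    interpErr P Q σ F = 0 :=
  sub_eq_zero.2 (hF.apply_rectPoint hP hQ (rectPoint_mem hX hY hP hQ hσ))

theorem abs_interpErr_le_Osc (hX : Convex ℝ X) (hY : Convex ℝ Y)
    (hF : Bornology.IsBounded (F '' X ×ˢ Y)) (hP : P ∈ X ×ˢ Y) (hQ : Q ∈ X ×ˢ Y) (hσ : σ ∈ sq) :
    |interpErr P Q σ F| ≤ Osc F (X ×ˢ Y) := by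
  have hmem : ∀ q ∈ X ×ˢ Y, F q ∈ Metric.closedBall (F (rectPoint P Q σ)) (Osc F (X ×ˢ Y)) :=
    fun q hq => abs_sub_le_Osc hF hq (rectPoint_mem hX hY hP hQ hσ)
  rw [interpErr_apply, abs_sub_comm]
  exact bilerp_mem (convex_closedBall _ _) hσ (hmem _ hP) (hmem _ ⟨hQ.1, hP.2⟩)
    (hmem _ ⟨hP.1, hQ.2⟩) (hmem _ hQ)

theorem Setup.interpErr_comp_U (st : Setup) (ij P Q σ : _) (F : ℝ × ℝ → ℝ) :
    interpErr P Q σ (fun p => F (st.U ij p)) = interpErr (st.U ij P) (st.U ij Q) σ F := by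
  rw [interpErr_apply, interpErr_apply, Setup.U_rectPoint]
  rfl

/-- The sum of the absolute bilinear interpolation errors at the images of `σ` under the four
identifications of the unit square with the rectangle with opposite corners `P` and `Q` that
preserve the axes. Summing makes it invariant under reversal of an axis. -/
def symErr (F : ℝ × ℝ → ℝ) (P Q σ : ℝ × ℝ) : ℝ :=
  |interpErr P Q σ F| + |interpErr (Q.1, P.2) (P.1, Q.2) σ F| +
    |interpErr (P.1, Q.2) (Q.1, P.2) σ F| + |interpErr Q P σ F|

theorem symErr_congr_of_swap {P' Q' : ℝ × ℝ}
    (hx : P'.1 = P.1 ∧ Q'.1 = Q.1 ∨ P'.1 = Q.1 ∧ Q'.1 = P.1)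
    (hy : P'.2 = P.2 ∧ Q'.2 = Q.2 ∨ P'.2 = Q.2 ∧ Q'.2 = P.2) (F : ℝ × ℝ → ℝ) (σ : ℝ × ℝ) :
    symErr F P' Q' σ = symErr F P Q σ := by
  obtain ⟨x, y⟩ := P'
  obtain ⟨x', y'⟩ := Q'
  unfold symErr
  rcases hx with ⟨rfl, rfl⟩ | ⟨rfl, rfl⟩ <;> rcases hy with ⟨rfl, rfl⟩ | ⟨rfl, rfl⟩
  · rfl
  all_goals ring

theorem symErr_nonneg (F : ℝ × ℝ → ℝ) (P Q σ : ℝ × ℝ) : 0 ≤ symErr F P Q σ := by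
  unfold symErr
  positivity

theorem symErr_le_Osc (hX : Convex ℝ X) (hY : Convex ℝ Y)
    (hF : Bornology.IsBounded (F '' X ×ˢ Y)) (hP : P ∈ X ×ˢ Y) (hQ : Q ∈ X ×ˢ Y) (hσ : σ ∈ sq) :
    symErr F P Q σ ≤ 4 * Osc F (X ×ˢ Y) := by
  have h : ∀ P ∈ X ×ˢ Y, ∀ Q ∈ X ×ˢ Y, |interpErr P Q σ F| ≤ Osc F (X ×ˢ Y) :=
    fun P hP Q hQ => abs_interpErr_le_Osc hX hY hF hP hQ hσ
  unfold symErr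
  linarith [h P hP Q hQ, h (Q.1, P.2) ⟨hQ.1, hP.2⟩ (P.1, Q.2) ⟨hP.1, hQ.2⟩,
    h (P.1, Q.2) ⟨hP.1, hQ.2⟩ (Q.1, P.2) ⟨hQ.1, hP.2⟩, h Q hQ P hP]

/-- The deviation of `f` from bilinear interpolation on a cell of the `M × M` grid, measured at
relative coordinates `σ`. -/
def cellDev (f : ℝ × ℝ → ℝ) (σ : ℝ × ℝ) (M : ℕ) (c : ℕ × ℕ) : ℝ :=
  symErr f (lowerCorner M c) (upperCorner M c) σ

variable {st : Setup} {m : ℕ} {γ : Fin m → Fin m → ℝ} {cl : ℕ × ℕ → Fin m} {L : ℕ}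
  {ij c : ℕ × ℕ} {r : Fin m}

theorem cellDev_le_Osc {M : ℕ} (hF : Bornology.IsBounded (F '' sq)) (hσ : σ ∈ sq)
    (hc : c ∈ cells M) : cellDev F σ M c ≤ 4 * Osc F (gridCell M c) :=
  symErr_le_Osc (convex_Icc _ _) (convex_Icc _ _) (isBounded_image_gridCell hF hc)
    (lowerCorner_mem M c) (upperCorner_mem M c) hσ

theorem cellDev_childCell (hL : 0 < L) (hij : ij ∈ cells st.N) (hc : coarsen L c ∈ st.blocks ij)
    (σ : ℝ × ℝ) : cellDev st.f σ (L * st.K * st.N) (st.childCell L ij c) =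
      symErr (fun p => st.f (st.U ij p)) (lowerCorner (L * st.N) c) (upperCorner (L * st.N) c)
        σ := by
  obtain ⟨hi, hj⟩ := mem_cells.1 hij
  obtain ⟨hci, hcj⟩ := Finset.mem_product.1 hc
  have hswap : symErr st.f (st.U ij (lowerCorner (L * st.N) c))
      (st.U ij (upperCorner (L * st.N) c)) σ =
        cellDev st.f σ (L * st.K * st.N) (st.childCell L ij c) :=
    symErr_congr_of_swap (st.expandingNodes_px.usub_xg hL hi hci)
      (st.expandingNodes_py.usub_xg hL hj hcj) _ _
  rw [← hswap]
  simp only [symErr, Setup.interpErr_comp_U]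
  rfl

-- With signs that turn `S` into `|S|`, the factor of `f` in the sum is the sum of `|S|` over the
-- branches, which is constant on the cell.
theorem exists_sum_mul_f_U_eqOn (hst : Steady st) (hγ : IsTransferMatrix st cl γ)
    (hc : c ∈ cells st.N) (r : Fin m) :
    ∃ (ε : ℕ × ℕ → ℝ) (b : ℝ × ℝ → ℝ), (∀ ij ∈ branches st cl r c, |ε ij| = 1) ∧
      IsBilinearOn b (gridCell st.N c) ∧
      EqOn (∑ ij ∈ branches st cl r c, ε ij • fun p => st.f (st.U ij p))
        (γ r (cl c) • st.f + b) (gridCell st.N c) := by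
  rcases (branches st cl r c).eq_empty_or_nonempty with hA | ⟨kl, hkl⟩
  · refine ⟨0, 0, by simp [hA], isBilinearOn_const 0 _, fun p hp => ?_⟩
    simp [← hγ.sum_abs_S r c hc p hp, hA]
  obtain ⟨hklN, -, hckl⟩ := mem_branches.1 hkl
  choose! ε hε hεS using fun ij => Setup.exists_abs_S_eq_mul (ij := ij) hst
  refine ⟨ε, fun p => ∑ ij ∈ branches st cl r c, ε ij * st.h (st.U ij p) +
    -γ r (cl c) * st.g (kl.1 + 1) (kl.2 + 1) p, fun ij hij => hε ij (mem_branches.1 hij).1,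
    (IsBilinearOn.sum fun ij hij => ?_).add
      (((Setup.isBilinearOn_g hklN).mono (Setup.gridCell_subset_dom hklN hckl)).const_mul _),
    fun p hp => ?_⟩
  · obtain ⟨hij, -, hcij⟩ := mem_branches.1 hij
    exact ((Setup.isBilinearOn_comp_U hij (Setup.isBilinearOn_h hij)).mono
      (Setup.gridCell_subset_dom hij hcij)).const_mul _
  have hterm : ∀ ij ∈ branches st cl r c, ε ij * st.f (st.U ij p) =
      |st.S (st.U ij p)| * (st.f p - st.g (kl.1 + 1) (kl.2 + 1) p) +
        ε ij * st.h (st.U ij p) := by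
    intro ij hij
    obtain ⟨hij, -, hcij⟩ := mem_branches.1 hij
    have hpij := Setup.gridCell_subset_dom hij hcij hp
    have hdom := Setup.dom_eq_of_mem_blocks hij hklN hcij hckl
    rw [Setup.f_U hij hpij, hεS ij hij _ (Setup.U_mem hij hpij),
      Setup.g_eqOn_of_dom_eq hij hklN hdom hpij]
    ring
  simp only [Finset.sum_apply, Pi.smul_apply, Pi.add_apply, smul_eq_mul]
  rw [Finset.sum_congr rfl hterm, Finset.sum_add_distrib, ← Finset.sum_mul,
    hγ.sum_abs_S r c hc p hp]
  ring

theorem gamma_mul_abs_interpErr_le (hst : Steady st) (hγ : IsTransferMatrix st cl γ)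
    (hc : c ∈ cells st.N) (hP : P ∈ gridCell st.N c) (hQ : Q ∈ gridCell st.N c) (hσ : σ ∈ sq)
    (r : Fin m) : γ r (cl c) * |interpErr P Q σ st.f| ≤
      ∑ ij ∈ branches st cl r c, |interpErr P Q σ fun p => st.f (st.U ij p)| := by
  have hX : Convex ℝ (gridIcc st.N c.1) := convex_Icc _ _
  have hY : Convex ℝ (gridIcc st.N c.2) := convex_Icc _ _
  obtain ⟨ε, b, hε, hb, heq⟩ := exists_sum_mul_f_U_eqOn hst hγ hc r
  calc γ r (cl c) * |interpErr P Q σ st.f|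
      = |interpErr P Q σ (∑ ij ∈ branches st cl r c, ε ij • fun p => st.f (st.U ij p))| := by
        rw [interpErr_congr hX hY hP hQ hσ heq, map_add, hb.interpErr_eq_zero hX hY hP hQ hσ,
          add_zero, map_smul, smul_eq_mul, abs_mul, abs_of_nonneg (hγ.nonneg r _)]
    _ ≤ ∑ ij ∈ branches st cl r c, |interpErr P Q σ fun p => st.f (st.U ij p)| := by
        rw [map_sum]
        refine (Finset.abs_sum_le_sum_abs _ _).trans_eq (Finset.sum_congr rfl fun ij hij => ?_)
        rw [map_smul, smul_eq_mul, abs_mul, hε ij hij, one_mul]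

theorem sum_gamma_mul_classSum_cellDev_le (hst : Steady st) (hγ : IsTransferMatrix st cl γ)
    (hL : 0 < L) (hσ : σ ∈ sq) (r : Fin m) :
    ∑ t, γ r t * classSum L st.N cl (cellDev st.f σ (L * st.N)) t ≤
      classSum (L * st.K) st.N cl (cellDev st.f σ (L * st.K * st.N)) r := by
  rw [sum_mul_classSum, classSum_mul_K hL]
  refine Finset.sum_le_sum fun c hc => ?_
  have hsub := gridCell_subset_coarsen hL st.N c
  have herr : ∀ {P Q : ℝ × ℝ}, P ∈ gridCell (L * st.N) c → Q ∈ gridCell (L * st.N) c →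
      γ r (cl (coarsen L c)) * |interpErr P Q σ st.f| ≤
        ∑ ij ∈ branches st cl r (coarsen L c), |interpErr P Q σ fun p => st.f (st.U ij p)| :=
    fun hP hQ =>
      gamma_mul_abs_interpErr_le hst hγ ((coarsen_mem_cells_iff hL).2 hc) (hsub hP) (hsub hQ) hσ r
  rw [Finset.sum_congr rfl fun ij hij => cellDev_childCell hL (mem_branches.1 hij).1
    (mem_branches.1 hij).2.2 σ]
  obtain ⟨hP₁, hP₂⟩ := lowerCorner_mem (L * st.N) c
  obtain ⟨hQ₁, hQ₂⟩ := upperCorner_mem (L * st.N) c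
  simp only [cellDev, symErr, mul_add, Finset.sum_add_distrib]
  exact add_le_add (add_le_add (add_le_add (herr ⟨hP₁, hP₂⟩ ⟨hQ₁, hQ₂⟩)
    (herr ⟨hQ₁, hP₂⟩ ⟨hP₁, hQ₂⟩)) (herr ⟨hP₁, hQ₂⟩ ⟨hQ₁, hP₂⟩)) (herr ⟨hQ₁, hQ₂⟩ ⟨hP₁, hP₂⟩)

end Deviation

/-! ### Growth of matrix powers -/

section MatrixGrowth

theorem exists_norm_pow_le {R : Type*} [NormedRing R] [NormedAlgebra ℂ R] [CompleteSpace R]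
    {a : R} {θ : ℝ} (hθ : 0 < θ) (ha : spectralRadius ℂ a < ENNReal.ofReal θ) :
    ∃ C : ℝ, 0 < C ∧ ∀ k, ‖a ^ k‖ ≤ C * θ ^ k := by
  have hev : ∀ᶠ k : ℕ in atTop, ‖a ^ k‖ ≤ θ ^ k := by
    have hlim := spectrum.pow_nnnorm_pow_one_div_tendsto_nhds_spectralRadius a
    filter_upwards [hlim.eventually_lt_const ha, eventually_gt_atTop 0] with k hk hk0
    have hk0' : (0 : ℝ) < k := by exact_mod_cast hk0
    have h := ENNReal.rpow_le_rpow hk.le hk0'.le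
    rw [← ENNReal.rpow_mul, one_div, inv_mul_cancel₀ hk0'.ne', ENNReal.rpow_one,
      ENNReal.rpow_natCast, ← ENNReal.ofReal_pow hθ.le, ← ENNReal.ofReal_coe_nnreal] at h
    exact (ENNReal.ofReal_le_ofReal_iff (by positivity)).1 h
  have hO : (fun k => a ^ k) =O[atTop] fun k => θ ^ k :=
    .of_bound 1 (hev.mono fun k hk => by rwa [one_mul, Real.norm_of_nonneg (by positivity)])
  obtain ⟨C, hC, h⟩ := Asymptotics.bound_of_isBigO_nat_atTop hO
  refine ⟨C, hC, fun k => ?_⟩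
  simpa [abs_of_pos hθ] using h (x := k) (by positivity)

attribute [local instance] Matrix.linftyOpNormedRing Matrix.linftyOpNormedAlgebra

variable {n : Type*} [Fintype n] [DecidableEq n]

theorem norm_apply_le_linftyOpNorm (M : Matrix n n ℂ) (i j : n) : ‖M i j‖ ≤ ‖M‖ := by
  rw [Matrix.linfty_opNorm_def]
  exact_mod_cast (Finset.single_le_sum (f := fun j => ‖M i j‖₊) (fun _ _ => zero_le)
    (Finset.mem_univ j)).trans
      (Finset.le_sup (f := fun i => ∑ j, ‖M i j‖₊) (Finset.mem_univ i))

theorem linftyOpNorm_le_sum (M : Matrix n n ℂ) : ‖M‖ ≤ ∑ i, ∑ j, ‖M i j‖ := by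
  have h : (Finset.univ.sup fun i => ∑ j, ‖M i j‖₊) ≤ ∑ i, ∑ j, ‖M i j‖₊ :=
    Finset.sup_le fun i _ => Finset.single_le_sum (f := fun i => ∑ j, ‖M i j‖₊)
      (fun _ _ => zero_le) (Finset.mem_univ i)
  rw [Matrix.linfty_opNorm_def]
  simpa using NNReal.coe_le_coe.2 h

theorem norm_map_algebraMap_pow_apply (A : Matrix n n ℝ) (k : ℕ) (i j : n) :
    ‖(A.map (algebraMap ℝ ℂ) ^ k) i j‖ = |(A ^ k) i j| := by
  have hmap : A.map (algebraMap ℝ ℂ) ^ k = (A ^ k).map (algebraMap ℝ ℂ) := by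
    simpa using (map_pow (algebraMap ℝ ℂ).mapMatrix A k).symm
  rw [hmap, Matrix.map_apply, norm_algebraMap', Real.norm_eq_abs]

theorem specRad_eq_sSup_image (A : Matrix n n ℝ) :
    specRad A = sSup (norm '' spectrum ℂ (A.map (algebraMap ℝ ℂ))) := by
  simp only [specRad, image, eq_comm]

theorem isCompact_norm_image_spectrum (A : Matrix n n ℂ) : IsCompact (norm '' spectrum ℂ A) :=
  (spectrum.isCompact A).image continuous_norm

theorem spectralRadius_le_ofReal_specRad (A : Matrix n n ℝ) :
    spectralRadius ℂ (A.map (algebraMap ℝ ℂ)) ≤ ENNReal.ofReal (specRad A) := by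
  refine iSup₂_le fun μ hμ => ?_
  rw [specRad_eq_sSup_image, ← ENNReal.ofReal_coe_nnreal, coe_nnnorm]
  exact ENNReal.ofReal_le_ofReal
    (le_csSup (isCompact_norm_image_spectrum _).bddAbove (mem_image_of_mem _ hμ))

theorem exists_abs_pow_apply_le {A : Matrix n n ℝ} {θ : ℝ} (hθ : 0 < θ) (hA : specRad A < θ) :
    ∃ C : ℝ, 0 < C ∧ ∀ k i j, |(A ^ k) i j| ≤ C * θ ^ k := by
  obtain ⟨C, hC, h⟩ := exists_norm_pow_le hθ ((spectralRadius_le_ofReal_specRad A).trans_lt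
    ((ENNReal.ofReal_lt_ofReal_iff hθ).2 hA))
  refine ⟨C, hC, fun k i j => ?_⟩
  rw [← norm_map_algebraMap_pow_apply]
  exact (norm_apply_le_linftyOpNorm _ i j).trans (h k)

theorem exists_mem_spectrum_norm_eq_specRad {A : Matrix n n ℝ} (hA : 0 < specRad A) :
    ∃ μ ∈ spectrum ℂ (A.map (algebraMap ℝ ℂ)), ‖μ‖ = specRad A := by
  rw [specRad_eq_sSup_image] at hA ⊢
  have hne : (norm '' spectrum ℂ (A.map (algebraMap ℝ ℂ))).Nonempty := by
    by_contra! h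
    rw [h, Real.sSup_empty] at hA
    exact hA.false
  exact (isCompact_norm_image_spectrum _).sSup_mem hne

theorem exists_mul_specRad_pow_le {A : Matrix n n ℝ} (hA : 0 < specRad A) :
    ∃ c : ℝ, 0 < c ∧ ∀ k, c * specRad A ^ k ≤ ∑ i, ∑ j, |(A ^ k) i j| := by
  obtain ⟨μ, hμ, hμA⟩ := exists_mem_spectrum_norm_eq_specRad hA
  set D := ‖(1 : Matrix n n ℂ)‖
  refine ⟨(D + 1)⁻¹, by positivity, fun k => ?_⟩
  rw [inv_mul_le_iff₀ (by positivity)]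
  calc specRad A ^ k = ‖μ ^ k‖ := by rw [norm_pow, hμA]
    _ ≤ ‖A.map (algebraMap ℝ ℂ) ^ k‖ * D :=
      spectrum.norm_le_norm_mul_of_mem (spectrum.pow_mem_pow _ k hμ)
    _ ≤ (∑ i, ∑ j, |(A ^ k) i j|) * (D + 1) := by
      simp only [← norm_map_algebraMap_pow_apply]
      gcongr
      · exact linftyOpNorm_le_sum _
      · exact le_add_of_nonneg_right zero_le_one
    _ = _ := mul_comm _ _

end MatrixGrowth

section VectorGrowth

open Matrix

variable {n : Type*} [Fintype n] [DecidableEq n] {A : Matrix n n ℝ}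

theorem pow_apply_nonneg (hA : ∀ i j, 0 ≤ A i j) (k : ℕ) (i j : n) : 0 ≤ (A ^ k) i j := by
  induction k generalizing i j with
  | zero =>
    rw [pow_zero, one_apply]
    split_ifs <;> norm_num
  | succ k ih =>
    rw [pow_succ, mul_apply]
    exact Finset.sum_nonneg fun l _ => mul_nonneg (ih _ _) (hA _ _)

-- The vector is `∑ θ⁻ᵏ Aᵏ 1`.
theorem exists_one_le_mulVec_add_eq (hA : ∀ i j, 0 ≤ A i j) {θ : ℝ} (hθ : 0 < θ)
    (hAθ : specRad A < θ) :
    ∃ w : n → ℝ, (∀ i, 1 ≤ w i) ∧ ∀ i, (A *ᵥ w) i + θ = θ * w i := by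
  obtain ⟨τ, hτ, hτθ⟩ := exists_between (max_lt hAθ hθ)
  obtain ⟨hAτ, hτ0⟩ := max_lt_iff.1 hτ
  obtain ⟨C, -, hC⟩ := exists_abs_pow_apply_le hτ0 hAτ
  let a : n → ℕ → ℝ := fun i k => θ⁻¹ ^ k * ∑ j, (A ^ k) i j
  have ha0 : ∀ i, a i 0 = 1 := fun i => by simp [a, one_apply]
  have hsumm : ∀ i, Summable (a i) := fun i => by
    refine .of_norm_bounded ((summable_geometric_of_lt_one (by positivity)
      ((div_lt_one hθ).2 hτθ)).mul_left (Fintype.card n * C)) fun k => ?_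
    calc ‖a i k‖ = θ⁻¹ ^ k * |∑ j, (A ^ k) i j| := by
          rw [norm_mul, norm_pow, norm_inv, Real.norm_of_nonneg hθ.le, Real.norm_eq_abs]
      _ ≤ θ⁻¹ ^ k * (Fintype.card n • (C * τ ^ k)) := by
          gcongr
          exact (Finset.abs_sum_le_sum_abs _ _).trans
            (Finset.sum_le_card_nsmul _ _ _ fun j _ => hC k i j)
      _ = Fintype.card n * C * (τ / θ) ^ k := by
          rw [nsmul_eq_mul, div_pow, inv_pow]
          ring
  have hnn : ∀ i k, 0 ≤ a i k := fun i k =>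
    mul_nonneg (by positivity) (Finset.sum_nonneg fun j _ => pow_apply_nonneg hA k i j)
  have hshift : ∀ i k, ∑ j, A i j * a j k = θ * a i (k + 1) := fun i k => by
    simp only [a, pow_succ' A, pow_succ θ⁻¹, mul_apply, Finset.mul_sum]
    rw [Finset.sum_comm]
    refine Finset.sum_congr rfl fun l _ => Finset.sum_congr rfl fun j _ => ?_
    field_simp
  refine ⟨fun i => ∑' k, a i k, fun i => ?_, fun i => ?_⟩
  · rw [← ha0 i]
    exact (hsumm i).le_tsum 0 fun k _ => hnn i k
  · calc ∑ j, A i j * ∑' k, a j k + θ = (∑' k, θ * a i (k + 1)) + θ := by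
          simp only [← tsum_mul_left, ← hshift]
          rw [Summable.tsum_finsetSum fun j _ => (hsumm j).mul_left _]
      _ = θ * ∑' k, a i k := by
          rw [tsum_mul_left, (hsumm i).tsum_eq_zero_add, ha0]
          ring

theorem exists_le_mul_pow_of_le_mulVec_add (hA : ∀ i j, 0 ≤ A i j) {θ κ C : ℝ} (hC : 0 ≤ C)
    (hκ : 0 ≤ κ) (hκθ : κ < θ) (hAθ : specRad A < θ) {v : ℕ → n → ℝ}
    (hv : ∀ k i, v (k + 1) i ≤ (A *ᵥ v k) i + C * κ ^ k) :
    ∃ D : ℝ, 0 ≤ D ∧ ∀ k i, v k i ≤ D * θ ^ k := by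
  have hθ : 0 < θ := hκ.trans_lt hκθ
  obtain ⟨w, hw1, hw⟩ := exists_one_le_mulVec_add_eq hA hθ hAθ
  have hw0 : ∀ i, 0 ≤ w i := fun i => zero_le_one.trans (hw1 i)
  set D := ∑ i, |v 0 i| + C / θ
  have hD0 : 0 ≤ D := by positivity
  have hbound : ∀ k i, v k i ≤ D * θ ^ k * w i := by
    intro k
    induction k with
    | zero =>
      intro i
      rw [pow_zero, mul_one]
      calc v 0 i ≤ ∑ j, |v 0 j| := (le_abs_self _).trans
            (Finset.single_le_sum (f := fun j => |v 0 j|) (fun _ _ => abs_nonneg _)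
              (Finset.mem_univ i))
        _ ≤ D := le_add_of_nonneg_right (by positivity)
        _ ≤ D * w i := le_mul_of_one_le_right hD0 (hw1 i)
    | succ k ih =>
      intro i
      have hCD : C ≤ D * θ := (div_le_iff₀ hθ).1 (le_add_of_nonneg_left (by positivity))
      calc v (k + 1) i ≤ (A *ᵥ v k) i + C * κ ^ k := hv k i
        _ ≤ (A *ᵥ ((D * θ ^ k) • w)) i + D * θ * θ ^ k := by
          gcongr with j
          · exact dotProduct_le_dotProduct_of_nonneg_left ih (hA i)
        _ = D * θ ^ k * ((A *ᵥ w) i + θ) := by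
          rw [mulVec_smul, Pi.smul_apply, smul_eq_mul]
          ring
        _ = D * θ ^ (k + 1) * w i := by
          rw [hw]
          ring
  refine ⟨D * ∑ i, w i, mul_nonneg hD0 (Finset.sum_nonneg fun i _ => hw0 i), fun k i => ?_⟩
  rw [mul_right_comm]
  refine (hbound k i).trans (mul_le_mul_of_nonneg_left ?_ (by positivity))
  exact Finset.single_le_sum (fun j _ => hw0 j) (Finset.mem_univ i)

theorem pow_mulVec_le (hA : ∀ i j, 0 ≤ A i j) {v : ℕ → n → ℝ} (hv : ∀ k, A *ᵥ v k ≤ v (k + 1))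
    (k l : ℕ) : A ^ k *ᵥ v l ≤ v (k + l) := by
  induction k with
  | zero => simp
  | succ k ih =>
    rw [pow_succ', ← mulVec_mulVec, Nat.add_right_comm]
    exact le_trans (fun i => dotProduct_le_dotProduct_of_nonneg_left ih (hA i)) (hv _)

theorem exists_mul_specRad_pow_le_of_mulVec_le (hA : ∀ i j, 0 ≤ A i j) (hρ : 0 < specRad A)
    {v : ℕ → n → ℝ} (hv0 : ∀ k, 0 ≤ v k) (hv : ∀ k, A *ᵥ v k ≤ v (k + 1))
    (hpos : ∀ i, ∃ k, 0 < v k i) {T : ℕ → ℝ} {D : ℝ} (hD : 0 ≤ D)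
    (hvT : ∀ k, ∑ i, v k i ≤ T k) (hT : ∀ k, T (k + 1) ≤ D * T k) :
    ∃ c : ℝ, 0 < c ∧ ∀ k, c * specRad A ^ k ≤ T k := by
  obtain ⟨c, hc, hcA⟩ := exists_mul_specRad_pow_le hρ
  choose l hl using hpos
  have hTadd : ∀ k l, T (k + l) ≤ D ^ l * T k := by
    intro k l
    induction l with
    | zero => simp
    | succ l ih =>
      rw [pow_succ', mul_assoc]
      exact (hT _).trans (mul_le_mul_of_nonneg_left ih hD)
  have hcol : ∀ k j, ∑ i, (A ^ k) i j ≤ D ^ l j / v (l j) j * T k := by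
    intro k j
    rw [div_mul_eq_mul_div, le_div_iff₀ (hl j), Finset.sum_mul]
    refine (Finset.sum_le_sum fun i _ => ?_).trans ((hvT (k + l j)).trans (hTadd k (l j)))
    exact (Finset.single_le_sum (f := fun j' => (A ^ k) i j' * v (l j) j')
      (fun j' _ => mul_nonneg (pow_apply_nonneg hA k i j') (hv0 _ _)) (Finset.mem_univ j)).trans
        (pow_mulVec_le hA hv k (l j) i)
  set E := ∑ j, D ^ l j / v (l j) j
  have hE : 0 ≤ E := Finset.sum_nonneg fun j _ => div_nonneg (by positivity) (hl j).le
  have hT0 : ∀ k, 0 ≤ T k := fun k => (Finset.sum_nonneg fun i _ => hv0 k i).trans (hvT k)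
  refine ⟨c / (E + 1), by positivity, fun k => ?_⟩
  rw [div_mul_eq_mul_div, div_le_iff₀ (by positivity)]
  calc c * specRad A ^ k ≤ ∑ i, ∑ j, (A ^ k) i j :=
        (hcA k).trans_eq (by simp only [abs_of_nonneg (pow_apply_nonneg hA k _ _)])
    _ = ∑ j, ∑ i, (A ^ k) i j := Finset.sum_comm
    _ ≤ ∑ j, D ^ l j / v (l j) j * T k := Finset.sum_le_sum fun j _ => hcol k j
    _ ≤ T k * (E + 1) := by
        rw [← Finset.sum_mul]
        linarith [hT0 k]

theorem exists_pos_of_isPathFrom {m : ℕ} {γ : Fin m → Fin m → ℝ} (hγ : ∀ r t, 0 ≤ γ r t)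
    {v : ℕ → Fin m → ℝ} (hv0 : ∀ k, 0 ≤ v k) (hv : ∀ k, of γ *ᵥ v k ≤ v (k + 1)) {r t : Fin m}
    {l : ℕ} (ht : 0 < v l t) (htr : IsPathFrom γ t r) : ∃ k, 0 < v k r := by
  obtain ⟨k, -, c, rfl, rfl, hc⟩ := htr
  suffices h : ∀ i ≤ k, 0 < v (l + i) (c i) from ⟨_, h k le_rfl⟩
  intro i hi
  induction i with
  | zero => exact ht
  | succ i ih =>
    calc 0 < γ (c (i + 1)) (c i) * v (l + i) (c i) :=
          mul_pos (hc (i + 1) (by lia) hi) (ih (by lia))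
      _ ≤ (of γ *ᵥ v (l + i)) (c (i + 1)) :=
          Finset.single_le_sum (f := fun t => γ (c (i + 1)) t * v (l + i) t)
            (fun t _ => mul_nonneg (hγ _ t) (hv0 _ t)) (Finset.mem_univ _)
      _ ≤ v (l + (i + 1)) (c (i + 1)) := hv _ _

end VectorGrowth

section OscillationGrowth

open Matrix

variable {st : Setup} {m : ℕ} {γ : Fin m → Fin m → ℝ} {cl : ℕ × ℕ → Fin m}

theorem exists_totalOsc_le (hγ : IsTransferMatrix st cl γ) {θ : ℝ} (hK : st.K < θ)
    (hθ : specRad (of γ) < θ) :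
    ∃ C : ℝ, 0 ≤ C ∧ ∀ k : ℕ, totalOsc st.f (st.K ^ k * st.N) ≤ C * θ ^ k := by
  obtain ⟨C, hC, hrec⟩ := exists_classSum_Osc_le hγ
  obtain ⟨D, hD, hbound⟩ := exists_le_mul_pow_of_le_mulVec_add (A := of γ) hγ.nonneg hC
    (Nat.cast_nonneg st.K) hK hθ
    (v := fun k => classSum (st.K ^ k) st.N cl fun c => Osc st.f (gridCell (st.K ^ k * st.N) c))
    fun k r => by
      have h := hrec (st.K ^ k) (pow_pos st.pos_K k) r
      rwa [Nat.cast_pow, ← pow_succ] at h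
  refine ⟨m * D, by positivity, fun k => ?_⟩
  rw [totalOsc, ← sum_classSum _ _ cl, mul_assoc]
  exact (Finset.sum_le_card_nsmul _ _ _ fun r _ => hbound k r).trans_eq (by simp)

theorem exists_mul_specRad_pow_le_totalOsc (hst : Steady st) (hγ : IsTransferMatrix st cl γ)
    (hirr : ∀ r t, IsPathFrom γ t r) (hρ : 0 < specRad (of γ)) {σ : ℝ × ℝ} (hσ : σ ∈ sq)
    {c : ℕ × ℕ} (hc : c ∈ cells st.N) (hcσ : 0 < cellDev st.f σ st.N c) :
    ∃ δ : ℝ, 0 < δ ∧ ∀ k : ℕ, δ * specRad (of γ) ^ k ≤ totalOsc st.f (st.K ^ k * st.N) := by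
  set v : ℕ → Fin m → ℝ := fun k =>
    classSum (st.K ^ k) st.N cl (cellDev st.f σ (st.K ^ k * st.N)) with hvdef
  have hv0 : ∀ k, 0 ≤ v k := fun k => classSum_nonneg (fun _ => symErr_nonneg _ _ _ _) _ _ _
  have hv : ∀ k, of γ *ᵥ v k ≤ v (k + 1) := fun k r => by
    have h := sum_gamma_mul_classSum_cellDev_le hst hγ (pow_pos st.pos_K k) hσ r
    rwa [← pow_succ] at h
  have hvc : 0 < v 0 (cl c) := by
    simp only [hvdef, pow_zero, classSum, one_mul]
    refine hcσ.trans_le (Finset.single_le_sum (f := cellDev st.f σ st.N)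
      (fun _ _ => symErr_nonneg _ _ _ _) ?_)
    simp [hc, coarsen]
  have hpos : ∀ r, ∃ k, 0 < v k r := fun r =>
    exists_pos_of_isPathFrom hγ.nonneg hv0 hv hvc (hirr r (cl c))
  have hvT : ∀ k, ∑ r, v k r ≤ 4 * totalOsc st.f (st.K ^ k * st.N) := fun k => by
    rw [sum_classSum, totalOsc, Finset.mul_sum]
    exact Finset.sum_le_sum fun c hc => cellDev_le_Osc st.isBounded_image_f hσ hc
  have hT : ∀ k, 4 * totalOsc st.f (st.K ^ (k + 1) * st.N) ≤
      (st.K : ℝ) ^ 2 * (4 * totalOsc st.f (st.K ^ k * st.N)) := fun k => by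
    rw [pow_succ', mul_assoc]
    linarith [totalOsc_mul_le st.isBounded_image_f st.pos_K (st.K ^ k * st.N)]
  obtain ⟨δ, hδ, hδT⟩ := exists_mul_specRad_pow_le_of_mulVec_le (A := of γ) hγ.nonneg hρ hv0 hv hpos
    (by positivity) hvT hT
  exact ⟨δ / 4, by positivity, fun k => by linarith [hδT k]⟩

end OscillationGrowth

/-! ### Degeneracy -/

theorem eq_zero_of_bilerp_eq_zero {F : ℝ × ℝ → ℝ} {P Q σ : ℝ × ℝ}
    (hσ : σ ∈ Ioo (0 : ℝ) 1 ×ˢ Ioo (0 : ℝ) 1) (h₀₀ : 0 ≤ F P) (h₁₀ : 0 ≤ F (Q.1, P.2))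
    (h₀₁ : 0 ≤ F (P.1, Q.2)) (h₁₁ : 0 ≤ F Q) (h : bilerp F P Q σ = 0) :
    F P = 0 ∧ F (P.1, Q.2) = 0 ∧ F (Q.1, P.2) = 0 ∧ F Q = 0 := by
  obtain ⟨⟨hx₀, hx₁⟩, hy₀, hy₁⟩ := hσ
  have hx₁' := sub_pos.2 hx₁
  have hy₁' := sub_pos.2 hy₁
  rw [bilerp_eq] at h
  have w₀₀ := mul_pos hx₁' hy₁'
  have w₁₀ := mul_pos hx₀ hy₁'
  have w₀₁ := mul_pos hx₁' hy₀
  have w₁₁ := mul_pos hx₀ hy₀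
  have t₀₀ := mul_nonneg w₀₀.le h₀₀
  have t₁₀ := mul_nonneg w₁₀.le h₁₀
  have t₀₁ := mul_nonneg w₀₁.le h₀₁
  have t₁₁ := mul_nonneg w₁₁.le h₁₁
  exact ⟨(mul_eq_zero.1 (by linarith)).resolve_left w₀₀.ne',
    (mul_eq_zero.1 (by linarith)).resolve_left w₀₁.ne',
    (mul_eq_zero.1 (by linarith)).resolve_left w₁₀.ne',
    (mul_eq_zero.1 (by linarith)).resolve_left w₁₁.ne'⟩

namespace Setup

variable {st : Setup} {ij : ℕ × ℕ}

/-- The condition that degeneracy of a pair `(i + 1, j + 1)` imposes on each element of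
`A(i + 1, j + 1)`. -/
def IsTrivialPair (st : Setup) (ij : ℕ × ℕ) : Prop :=
  (st.s ij.1 ij.2 = 0 ∧ st.s ij.1 (ij.2 + 1) = 0 ∧
    st.s (ij.1 + 1) ij.2 = 0 ∧ st.s (ij.1 + 1) (ij.2 + 1) = 0) ∨
  ∀ p ≤ st.N, ∀ q ≤ st.N, (xg st.N p, xg st.N q) ∈ st.dom ij →
    st.z p q = st.g (ij.1 + 1) (ij.2 + 1) (xg st.N p, xg st.N q)

theorem exists_not_degenPair_iff (st : Setup) :
    (∃ i j, 1 ≤ i ∧ i ≤ st.N ∧ 1 ≤ j ∧ j ≤ st.N ∧ ¬DegenPair st i j) ↔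
      ∃ ij ∈ cells st.N, ¬st.IsTrivialPair ij := by
  constructor
  · rintro ⟨i, j, hi, hi', hj, hj', hd⟩
    simp only [DegenPair, not_forall] at hd
    obtain ⟨⟨k, l⟩, hkl, hd⟩ := hd
    have hrange : 1 ≤ k ∧ k ≤ st.N ∧ 1 ≤ l ∧ l ≤ st.N := by
      rcases hkl with hkl | ⟨n, _, c, _, hcn, hc, _⟩
      · cases hkl
        exact ⟨hi, hi', hj, hj'⟩
      · simpa only [hcn] using hc n le_rfl
    obtain ⟨hk, hk', hl, hl'⟩ := hrange
    obtain ⟨k, rfl⟩ := Nat.exists_eq_add_of_le' hk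
    obtain ⟨l, rfl⟩ := Nat.exists_eq_add_of_le' hl
    exact ⟨(k, l), mem_cells.2 ⟨hk', hl'⟩, hd⟩
  · rintro ⟨ij, hij, ht⟩
    obtain ⟨hi, hj⟩ := mem_cells.1 hij
    exact ⟨ij.1 + 1, ij.2 + 1, by lia, hi, by lia, hj, fun hd => ht (hd _ (.inl rfl))⟩

theorem f_sub_h_U (hij : ij ∈ cells st.N) {p : ℝ × ℝ} (hp : p ∈ st.dom ij) :
    st.f (st.U ij p) - st.h (st.U ij p) =
      st.S (st.U ij p) * (st.f p - st.g (ij.1 + 1) (ij.2 + 1) p) :=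
  sub_eq_of_eq_add (f_U hij hp)

theorem f_grid_eq_h {i j : ℕ} (hi : i ≤ st.N) (hj : j ≤ st.N) :
    st.f (xg st.N i, xg st.N j) = st.h (xg st.N i, xg st.N j) :=
  (st.hfval i hi j hj).trans (st.hhval i hi j hj).symm

theorem U_node (st : Setup) (ij : ℕ × ℕ) : st.U ij (st.node ij) = lowerCorner st.N ij :=
  Prod.ext (usub_left ..) (usub_left ..)

theorem U_node_succ (hij : ij ∈ cells st.N) :
    st.U ij (st.node (ij.1 + 1, ij.2 + 1)) = upperCorner st.N ij :=
  let ⟨hi, hj⟩ := mem_cells.1 hij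
  Prod.ext (st.expandingNodes_px.usub_right hi) (st.expandingNodes_py.usub_right hj)

theorem eqOn_f_h_of_interpErr_eq_zero (hij : ij ∈ cells st.N)
    (h : ∀ σ ∈ sq, interpErr (lowerCorner st.N ij) (upperCorner st.N ij) σ st.f = 0) :
    EqOn st.f st.h (gridCell st.N ij) := by
  obtain ⟨hi, hj⟩ := mem_cells.1 hij
  rw [← image_rectPoint_corners]
  rintro _ ⟨σ, hσ, rfl⟩
  have hmem : rectPoint (lowerCorner st.N ij) (upperCorner st.N ij) σ ∈ gridCell st.N ij :=
    image_rectPoint_corners st.N ij ▸ mem_image_of_mem _ hσ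
  rw [sub_eq_zero.1 (h σ hσ), (isBilinearOn_h hij).apply_rectPoint (lowerCorner_mem _ _)
    (upperCorner_mem _ _) hmem, bilerp_eq, bilerp_eq]
  simp only [lowerCorner, upperCorner]
  rw [f_grid_eq_h (by lia) (by lia), f_grid_eq_h (by lia) (by lia),
    f_grid_eq_h (by lia) (by lia), f_grid_eq_h (by lia) (by lia)]

theorem S_rectPoint_ne_zero (hst : Steady st) (hij : ij ∈ cells st.N)
    (hs : ¬(st.s ij.1 ij.2 = 0 ∧ st.s ij.1 (ij.2 + 1) = 0 ∧
      st.s (ij.1 + 1) ij.2 = 0 ∧ st.s (ij.1 + 1) (ij.2 + 1) = 0))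
    {σ : ℝ × ℝ} (hσ : σ ∈ Ioo (0 : ℝ) 1 ×ˢ Ioo (0 : ℝ) 1) :
    st.S (rectPoint (lowerCorner st.N ij) (upperCorner st.N ij) σ) ≠ 0 := fun h0 => by
  obtain ⟨hi, hj⟩ := mem_cells.1 hij
  have hmem : rectPoint (lowerCorner st.N ij) (upperCorner st.N ij) σ ∈ gridCell st.N ij :=
    image_rectPoint_corners st.N ij ▸
      mem_image_of_mem _ (prod_mono Ioo_subset_Icc_self Ioo_subset_Icc_self hσ)
  have hS := (isBilinearOn_abs_S hst hij).apply_rectPoint (lowerCorner_mem _ _)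
    (upperCorner_mem _ _) hmem
  rw [h0, abs_zero] at hS
  have hcorners := eq_zero_of_bilerp_eq_zero hσ (abs_nonneg _) (abs_nonneg _) (abs_nonneg _)
    (abs_nonneg _) hS.symm
  simp only [abs_eq_zero, lowerCorner, upperCorner] at hcorners
  rw [st.hSval _ (by lia) _ (by lia), st.hSval _ (by lia) _ (by lia),
    st.hSval _ (by lia) _ (by lia), st.hSval _ (by lia) _ (by lia)] at hcorners
  exact hs hcorners

theorem eqOn_f_g_of_eqOn_f_h (hst : Steady st) (hij : ij ∈ cells st.N)
    (hs : ¬(st.s ij.1 ij.2 = 0 ∧ st.s ij.1 (ij.2 + 1) = 0 ∧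
      st.s (ij.1 + 1) ij.2 = 0 ∧ st.s (ij.1 + 1) (ij.2 + 1) = 0))
    (h : EqOn st.f st.h (gridCell st.N ij)) :
    EqOn st.f (st.g (ij.1 + 1) (ij.2 + 1)) (st.dom ij) := by
  set R := rectPoint (st.node ij) (st.node (ij.1 + 1, ij.2 + 1)) with hR
  have himage : R '' sq = st.dom ij := by rw [hR, image_rectPoint_sq, dom_eq_uIcc]
  have hmaps : MapsTo R sq (st.dom ij) := fun σ hσ => himage ▸ mem_image_of_mem R hσ
  have hRcont : ContinuousOn R sq := by
    unfold R rectPoint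
    simp only [AffineMap.lineMap_apply_ring']
    fun_prop
  obtain ⟨Λ, hΛ⟩ := st.exists_lipschitzOnWith
  have hinterior : EqOn (st.f ∘ R) (st.g (ij.1 + 1) (ij.2 + 1) ∘ R)
      (Ioo (0 : ℝ) 1 ×ˢ Ioo (0 : ℝ) 1) := fun σ hσ => by
    have hmem := hmaps (prod_mono Ioo_subset_Icc_self Ioo_subset_Icc_self hσ)
    have hS : st.S (st.U ij (R σ)) ≠ 0 := by
      rw [hR, U_rectPoint, U_node, U_node_succ hij]
      exact S_rectPoint_ne_zero hst hij hs hσ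
    have hU := f_sub_h_U hij hmem
    rw [h (U_mem hij hmem), sub_self, eq_comm, mul_eq_zero, sub_eq_zero] at hU
    exact hU.resolve_left hS
  have hclosure : EqOn (st.f ∘ R) (st.g (ij.1 + 1) (ij.2 + 1) ∘ R) sq :=
    hinterior.of_subset_closure
      ((st.hfcont.mono (dom_subset_sq hij)).comp hRcont hmaps)
      ((hΛ ij hij).2.2.continuousOn.comp hRcont hmaps)
      (prod_mono Ioo_subset_Icc_self Ioo_subset_Icc_self)
      (by rw [closure_prod_eq, closure_Ioo zero_ne_one]; rfl)
  rw [← himage]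
  rintro _ ⟨σ, hσ, rfl⟩
  exact hclosure hσ

theorem exists_interpErr_ne_zero (hst : Steady st) (hij : ij ∈ cells st.N)
    (ht : ¬st.IsTrivialPair ij) :
    ∃ σ ∈ sq, interpErr (lowerCorner st.N ij) (upperCorner st.N ij) σ st.f ≠ 0 := by
  by_contra! h
  obtain ⟨hs, hz⟩ := not_or.1 ht
  have hfg := eqOn_f_g_of_eqOn_f_h hst hij hs (eqOn_f_h_of_interpErr_eq_zero hij h)
  exact hz fun p hp q hq hmem => (st.hfval p hp q hq).symm.trans (hfg hmem)

theorem exists_cellDev_pos (hst : Steady st) (h : ∃ ij ∈ cells st.N, ¬st.IsTrivialPair ij) :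
    ∃ σ ∈ sq, ∃ c ∈ cells st.N, 0 < cellDev st.f σ st.N c := by
  obtain ⟨ij, hij, ht⟩ := h
  obtain ⟨σ, hσ, hne⟩ := exists_interpErr_ne_zero hst hij ht
  refine ⟨σ, hσ, ij, hij, ?_⟩
  have := abs_pos.2 hne
  unfold cellDev symErr
  positivity

theorem eqOn_g_h (hij : ij ∈ cells st.N)
    (h : ∀ p ≤ st.N, ∀ q ≤ st.N, (xg st.N p, xg st.N q) ∈ st.dom ij →
      st.z p q = st.g (ij.1 + 1) (ij.2 + 1) (xg st.N p, xg st.N q)) :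
    EqOn (st.g (ij.1 + 1) (ij.2 + 1)) st.h (st.dom ij) := fun p hp => by
  obtain ⟨c, hc, hpc⟩ := exists_mem_blocks_of_mem_dom hij hp
  have hcN := blocks_subset hij hc
  obtain ⟨hc₁, hc₂⟩ := mem_cells.1 hcN
  have hsub := gridCell_subset_dom hij hc
  have hlow := lowerCorner_mem st.N c
  have hupp := upperCorner_mem st.N c
  have hcorner : ∀ k ≤ st.N, ∀ l ≤ st.N, (xg st.N k, xg st.N l) ∈ gridCell st.N c →
      st.g (ij.1 + 1) (ij.2 + 1) (xg st.N k, xg st.N l) = st.h (xg st.N k, xg st.N l) :=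
    fun k hk l hl hmem => (h k hk l hl (hsub hmem)).symm.trans (st.hhval k hk l hl).symm
  have hg := (isBilinearOn_g hij).mono hsub
  have hh := isBilinearOn_h hcN
  rw [gridCell_eq_uIcc] at hg hh hpc
  exact hg.eq_of_corners hh (hcorner _ (by lia) _ (by lia) hlow)
    (hcorner _ (by lia) _ (by lia) ⟨hupp.1, hlow.2⟩)
    (hcorner _ (by lia) _ (by lia) ⟨hlow.1, hupp.2⟩) (hcorner _ (by lia) _ (by lia) hupp) hpc

-- At a point where `|f - h|` is largest, the functional equation bounds it by `|S| < 1` times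
-- itself.
theorem eqOn_f_h_of_isTrivialPair (ht : ∀ ij ∈ cells st.N, st.IsTrivialPair ij) :
    EqOn st.f st.h sq := by
  obtain ⟨q, hq, hmax⟩ := (isCompact_Icc.prod isCompact_Icc).exists_isMaxOn
    ⟨(0, 0), ⟨left_mem_Icc.2 zero_le_one, left_mem_Icc.2 zero_le_one⟩⟩
    (st.hfcont.sub st.hhcont).abs
  suffices hle : |st.f q - st.h q| ≤ 0 from
    fun p hp => sub_eq_zero.1 (abs_nonpos_iff.1 ((hmax hp).trans hle))
  obtain ⟨ij, hij, hqij⟩ := exists_mem_gridCell st.pos_N hq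
  obtain ⟨p, hp, rfl⟩ := (U_image_dom hij).symm ▸ hqij
  rw [f_sub_h_U hij hp]
  rcases ht ij hij with ⟨h₀₀, h₀₁, h₁₀, h₁₁⟩ | hz
  · have hS : st.S (st.U ij p) ∈ ({0} : Set ℝ) :=
      S_mem_of_corners (convex_singleton 0) hij h₀₀ h₁₀ h₀₁ h₁₁ hqij
    simp [mem_singleton_iff.1 hS]
  · have hfix : |st.f (st.U ij p) - st.h (st.U ij p)| =
        |st.S (st.U ij p)| * |st.f p - st.h p| := by
      rw [f_sub_h_U hij hp, abs_mul, eqOn_g_h hij hz hp]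
    have hle : |st.f p - st.h p| ≤ |st.f (st.U ij p) - st.h (st.U ij p)| :=
      hmax (dom_subset_sq hij hp)
    rw [← f_sub_h_U hij hp]
    nlinarith [abs_S_lt_one hij hqij, abs_nonneg (st.S (st.U ij p)), abs_nonneg (st.f p - st.h p)]

theorem exists_totalOsc_le_of_isTrivialPair (ht : ∀ ij ∈ cells st.N, st.IsTrivialPair ij) :
    ∃ C, 0 ≤ C ∧ ∀ k, totalOsc st.f (st.K ^ k * st.N) ≤ C * st.K ^ k := by
  obtain ⟨Λ, hΛ⟩ := st.exists_lipschitzOnWith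
  have hfh := eqOn_f_h_of_isTrivialPair ht
  refine ⟨Λ * st.N, by positivity, fun k => ?_⟩
  have hL : 0 < st.K ^ k := pow_pos st.pos_K k
  have hM : 0 < st.K ^ k * st.N := Nat.mul_pos hL st.pos_N
  have hOsc : ∀ c ∈ cells (st.K ^ k * st.N), Osc st.f (gridCell (st.K ^ k * st.N) c) ≤
      Λ * (1 / ((st.K ^ k * st.N : ℕ) : ℝ)) := fun c hc => by
    refine Osc_le (by positivity) fun p hp q hq => (le_abs_self _).trans ?_
    have hsub := gridCell_subset_coarsen hL st.N c
    rw [hfh (gridCell_subset_sq hc hp), hfh (gridCell_subset_sq hc hq)]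
    exact ((hΛ _ ((coarsen_mem_cells_iff hL).2 hc)).2.1.dist_le_mul _ (hsub hp) _ (hsub hq)).trans
      (by gcongr; exact dist_le_of_mem_gridCell hp hq)
  calc totalOsc st.f (st.K ^ k * st.N)
      ≤ ((st.K ^ k * st.N : ℕ) : ℝ) ^ 2 * (Λ * (1 / ((st.K ^ k * st.N : ℕ) : ℝ))) := by
        refine (Finset.sum_le_card_nsmul _ _ _ hOsc).trans_eq ?_
        rw [card_cells, nsmul_eq_mul, Nat.cast_pow]
    _ = Λ * st.N * st.K ^ k := by
        have : ((st.K ^ k * st.N : ℕ) : ℝ) ≠ 0 := Nat.cast_ne_zero.2 hM.ne'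
        field_simp
        push_cast
        ring

end Setup

/-! ### Counting coordinate cubes -/

section

variable {f : ℝ × ℝ → ℝ} {E : Set (ℝ × ℝ)} {ε : ℝ} {k : ℤ} {M : ℕ}

/-- The `k`-th interval `[kε, (k+1)ε]` of the mesh of size `ε`, so that `cube ε` is a product of
three of these. -/
def meshIcc (ε : ℝ) (k : ℤ) : Set ℝ := Icc (k * ε) ((k + 1) * ε)

/-- The indices of the intervals of the mesh of size `ε` that meet `[a, b]`. -/
def meshIndices (ε a b : ℝ) : Finset ℤ := Finset.Icc (⌈a / ε⌉ - 1) ⌊b / ε⌋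

/-- The indices of the `ε`-coordinate cubes that meet the graph of `f` over `E`. -/
def cubesOver (f : ℝ × ℝ → ℝ) (E : Set (ℝ × ℝ)) (ε : ℝ) : Set (ℤ × ℤ × ℤ) :=
  {k | ∃ p ∈ E, p.1 ∈ meshIcc ε k.1 ∧ p.2 ∈ meshIcc ε k.2.1 ∧ f p ∈ meshIcc ε k.2.2}

theorem Ncubes_graphOn (f : ℝ × ℝ → ℝ) (E : Set (ℝ × ℝ)) (ε : ℝ) :
    Ncubes (graphOn f E) ε = (cubesOver f E ε).ncard := by
  refine congrArg ncard (Set.ext fun k => ⟨?_, ?_⟩)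
  · rintro ⟨_, hk, p, hp, rfl⟩
    exact ⟨p, hp, hk⟩
  · rintro ⟨p, hp, hk⟩
    exact ⟨_, hk, p, hp, rfl⟩

theorem cubesOver_mono {E' : Set (ℝ × ℝ)} (h : E ⊆ E') : cubesOver f E ε ⊆ cubesOver f E' ε :=
  fun _ ⟨p, hp, hk⟩ => ⟨p, h hp, hk⟩

theorem mem_meshIcc_floor (hε : 0 < ε) (x : ℝ) : x ∈ meshIcc ε ⌊x / ε⌋ :=
  ⟨(le_div_iff₀ hε).1 (Int.floor_le _), (div_le_iff₀ hε).1 (Int.lt_floor_add_one _).le⟩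

theorem mem_meshIndices (hε : 0 < ε) {a b x : ℝ} (hx : x ∈ Icc a b) (hk : x ∈ meshIcc ε k) :
    k ∈ meshIndices ε a b := by
  rw [meshIndices, Finset.mem_Icc, sub_le_iff_le_add, Int.ceil_le, Int.le_floor,
    div_le_iff₀ hε, le_div_iff₀ hε, Int.cast_add, Int.cast_one]
  exact ⟨hx.1.trans hk.2, hk.1.trans hx.2⟩

theorem card_meshIndices_le (hε : 0 < ε) {a b : ℝ} (hab : a ≤ b) :
    ((meshIndices ε a b).card : ℝ) ≤ (b - a) / ε + 2 := by
  have : 0 ≤ (b - a) / ε := div_nonneg (sub_nonneg.2 hab) hε.le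
  rw [meshIndices, Int.card_Icc, ← Int.cast_natCast, Int.toNat_eq_max, Int.cast_max]
  refine max_le ?_ (by push_cast; positivity)
  push_cast
  rw [sub_div]
  linarith [Int.floor_le (b / ε), Int.le_ceil (a / ε)]

theorem cubesOver_subset (hε : 0 < ε) {a a' b b' c c' : ℝ}
    (hE : E ⊆ Icc a a' ×ˢ Icc b b') (hf : MapsTo f E (Icc c c')) :
    cubesOver f E ε ⊆
      ↑(meshIndices ε a a' ×ˢ meshIndices ε b b' ×ˢ meshIndices ε c c') := by
  rintro k ⟨p, hp, h₁, h₂, h₃⟩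
  simp only [Finset.coe_product, mem_prod, Finset.mem_coe]
  exact ⟨mem_meshIndices hε (hE hp).1 h₁, mem_meshIndices hε (hE hp).2 h₂,
    mem_meshIndices hε (hf hp) h₃⟩

theorem finite_cubesOver_sq (hf : Bornology.IsBounded (f '' sq)) (hε : 0 < ε) :
    (cubesOver f sq ε).Finite :=
  (Finset.finite_toSet _).subset (cubesOver_subset hε subset_rfl
    (mapsTo_iff_image_subset.2 hf.subset_Icc_sInf_sSup))

/-! #### Upper bound by oscillations -/

theorem ncard_cubesOver_gridCell_le (hM : 0 < M) (hMε : 1 / M ≤ ε) {c : ℕ × ℕ}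
    (hf : Bornology.IsBounded (f '' gridCell M c)) :
    ((cubesOver f (gridCell M c) ε).ncard : ℝ) ≤ 18 * (Osc f (gridCell M c) / ε + 1) := by
  have hε : 0 < ε := lt_of_lt_of_le (by positivity) hMε
  set y := f (lowerCorner M c)
  set ω := Osc f (gridCell M c)
  have hω : 0 ≤ ω := Osc_nonneg ..
  have hcol (a : ℕ) : ((meshIndices ε (xg M a) (xg M (a + 1))).card : ℝ) ≤ 3 := calc
    _ ≤ (xg M (a + 1) - xg M a) / ε + 2 := card_meshIndices_le hε (monotone_xg M a.le_succ)
    _ = 1 / M / ε + 2 := by unfold xg; push_cast; ring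
    _ ≤ 3 := by linarith [(div_le_one hε).2 hMε]
  have hheight : ((meshIndices ε (y - ω) (y + ω)).card : ℝ) ≤ 2 * (ω / ε + 1) :=
    (card_meshIndices_le hε (by linarith)).trans_eq (by ring)
  have hmaps : MapsTo f (gridCell M c) (Icc (y - ω) (y + ω)) := fun p hp =>
    mem_Icc_iff_abs_le.1 (abs_sub_le_Osc hf (lowerCorner_mem M c) hp)
  have hcard := ncard_le_ncard (cubesOver_subset hε subset_rfl hmaps) (Finset.finite_toSet _)
  rw [ncard_coe_finset, Finset.card_product, Finset.card_product] at hcard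
  calc ((cubesOver f (gridCell M c) ε).ncard : ℝ)
      ≤ 3 * (3 * (2 * (ω / ε + 1))) := by
        refine (Nat.cast_le.2 hcard).trans ?_
        push_cast
        gcongr
        exacts [hcol _, hcol _]
    _ = 18 * (ω / ε + 1) := by ring

theorem Ncubes_graphOn_le (hf : Bornology.IsBounded (f '' sq)) (hM : 0 < M) (hMε : 1 / M ≤ ε) :
    (Ncubes (graphOn f sq) ε : ℝ) ≤ 18 * (totalOsc f M / ε + M ^ 2) := by
  have hε : 0 < ε := lt_of_lt_of_le (by positivity) hMε
  have hsub : cubesOver f sq ε ⊆ ⋃ c ∈ cells M, cubesOver f (gridCell M c) ε :=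
    fun k ⟨p, hp, hk⟩ =>
      let ⟨c, hc, hpc⟩ := exists_mem_gridCell hM hp
      mem_biUnion hc ⟨p, hpc, hk⟩
  have hfin : (⋃ c ∈ cells M, cubesOver f (gridCell M c) ε).Finite :=
    (finite_cubesOver_sq hf hε).subset
      (iUnion₂_subset fun c hc => cubesOver_mono (gridCell_subset_sq hc))
  calc (Ncubes (graphOn f sq) ε : ℝ)
      ≤ ∑ c ∈ cells M, ((cubesOver f (gridCell M c) ε).ncard : ℝ) := by
        rw [Ncubes_graphOn]
        exact_mod_cast (ncard_le_ncard hsub hfin).trans (Finset.set_ncard_biUnion_le ..)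
    _ ≤ ∑ c ∈ cells M, 18 * (Osc f (gridCell M c) / ε + 1) := Finset.sum_le_sum fun c hc =>
        ncard_cubesOver_gridCell_le hM hMε (isBounded_image_gridCell hf hc)
    _ = 18 * (totalOsc f M / ε + M ^ 2) := by
        rw [← Finset.mul_sum, Finset.sum_add_distrib, ← Finset.sum_div, Finset.sum_const,
          card_cells, nsmul_one, Nat.cast_pow, totalOsc]

/-! #### Lower bounds -/

theorem one_div_sq_le_Ncubes_graphOn (hf : Bornology.IsBounded (f '' sq)) (hε : 0 < ε) :
    (1 / ε) ^ 2 ≤ (Ncubes (graphOn f sq) ε : ℝ) := by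
  set n := ⌊1 / ε⌋₊ + 1
  have hn : 1 / ε ≤ n := by exact_mod_cast (Nat.lt_floor_add_one _).le
  have hpoint : ∀ i < n, (i : ℝ) * ε ∈ Icc (0 : ℝ) 1 := fun i hi =>
    ⟨by positivity, (le_div_iff₀ hε).1 ((Nat.le_floor_iff (by positivity)).1 (by lia))⟩
  have hmesh (i : ℕ) : (i : ℝ) * ε ∈ meshIcc ε i := by
    constructor <;> push_cast <;> nlinarith
  have hcard : ((cells n : Set (ℕ × ℕ))).ncard ≤ (cubesOver f sq ε).ncard :=
    ncard_le_ncard_of_injOn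
      (fun c => ((c.1 : ℤ), (c.2 : ℤ), ⌊f (c.1 * ε, c.2 * ε) / ε⌋))
      (fun c hc => ⟨(c.1 * ε, c.2 * ε),
        ⟨hpoint _ (mem_cells.1 hc).1, hpoint _ (mem_cells.1 hc).2⟩,
        hmesh _, hmesh _, mem_meshIcc_floor hε _⟩)
      (fun c _ d _ h => by
        simp only [Prod.mk.injEq, Nat.cast_inj] at h
        exact Prod.ext h.1 h.2.1)
      (finite_cubesOver_sq hf hε)
  rw [ncard_coe_finset, card_cells] at hcard
  calc (1 / ε) ^ 2 ≤ (n : ℝ) ^ 2 := by gcongr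
    _ ≤ (Ncubes (graphOn f sq) ε : ℝ) := by
        rw [Ncubes_graphOn]
        exact_mod_cast hcard

theorem exists_mem_meshIcc_of_mem_Icc_floor (hε : 0 < ε) (hE : IsPreconnected E)
    (hf : ContinuousOn f E) {p q : ℝ × ℝ} (hp : p ∈ E) (hq : q ∈ E)
    (hk : k ∈ Icc ⌊f q / ε⌋ ⌊f p / ε⌋) : ∃ r ∈ E, f r ∈ meshIcc ε k := by
  have hk₁ : f q ≤ (k + 1) * ε := (mem_meshIcc_floor hε _).2.trans (by
    gcongr
    exact hk.1)
  have hk₂ : k * ε ≤ f p := (by gcongr; exact hk.2 : k * ε ≤ ⌊f p / ε⌋ * ε).trans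
    (mem_meshIcc_floor hε _).1
  rcases le_total (k * ε) (f q) with h | h
  · exact ⟨q, hq, h, hk₁⟩
  · obtain ⟨r, hr, hfr⟩ := hE.intermediate_value hq hp hf ⟨h, hk₂⟩
    exact ⟨r, hr, hfr.ge, hfr.le.trans (by gcongr; linarith)⟩

theorem Osc_le_mul_ncard_cubesOver (hε : 0 < ε) (hE : IsPreconnected E) (hf : ContinuousOn f E)
    (hfin : (cubesOver f E ε).Finite) : Osc f E ≤ ε * (cubesOver f E ε).ncard := by
  refine Osc_le (by positivity) fun p hp q hq => ?_
  choose! r hrE hr using fun k (hk : k ∈ Icc ⌊f q / ε⌋ ⌊f p / ε⌋) =>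
    exists_mem_meshIcc_of_mem_Icc_floor hε hE hf hp hq hk
  have hcard : (Icc ⌊f q / ε⌋ ⌊f p / ε⌋).ncard ≤ (cubesOver f E ε).ncard :=
    ncard_le_ncard_of_injOn (fun k => (⌊(r k).1 / ε⌋, ⌊(r k).2 / ε⌋, k))
      (fun k hk => ⟨r k, hrE k hk, mem_meshIcc_floor hε _, mem_meshIcc_floor hε _, hr k hk⟩)
      (fun k _ l _ h => (Prod.mk.inj (Prod.mk.inj h).2).2) hfin
  rw [← Finset.coe_Icc, ncard_coe_finset, Int.card_Icc] at hcard
  have hcard' : (⌊f p / ε⌋ + 1 - ⌊f q / ε⌋ : ℝ) ≤ (cubesOver f E ε).ncard := by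
    exact_mod_cast Int.toNat_le.1 hcard
  rw [← div_le_iff₀' hε, sub_div]
  linarith [Int.lt_floor_add_one (f p / ε), Int.floor_le (f q / ε)]

theorem gridIcc_eq_meshIcc (M a : ℕ) : gridIcc M a = meshIcc (1 / M) a := by
  unfold gridIcc meshIcc xg
  push_cast
  simp only [mul_one_div]

theorem card_filter_mem_cubesOver_le {L : ℝ} (hM : 0 < M) (hε : 0 < ε) (hMε : ε ≤ L / M)
    (k : ℤ × ℤ × ℤ) [DecidablePred fun c => k ∈ cubesOver f (gridCell M c) ε] :
    (({c ∈ cells M | k ∈ cubesOver f (gridCell M c) ε} : Finset (ℕ × ℕ)).card : ℝ) ≤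
      (L + 2) ^ 2 := by
  have hM' : (0 : ℝ) < 1 / M := by positivity
  set J : ℤ → Finset ℤ := fun l => meshIndices (1 / M) (l * ε) ((l + 1) * ε)
  have hJ (l : ℤ) : ((J l).card : ℝ) ≤ L + 2 :=
    (card_meshIndices_le hM' (by gcongr; linarith)).trans (by
      rw [← sub_mul, add_sub_cancel_left, one_mul, div_div_eq_mul_div, div_one]
      gcongr
      rwa [← le_div_iff₀ (by positivity)])
  have hcard : ({c ∈ cells M | k ∈ cubesOver f (gridCell M c) ε} : Finset (ℕ × ℕ)).card ≤
      (J k.1 ×ˢ J k.2.1).card := by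
    refine Finset.card_le_card_of_injOn (fun c => ((c.1 : ℤ), (c.2 : ℤ))) (fun c hc => ?_)
      fun c _ d _ h => ?_
    · obtain ⟨p, hp, h₁, h₂, -⟩ := (Finset.mem_filter.1 hc).2
      rw [gridCell, gridIcc_eq_meshIcc, gridIcc_eq_meshIcc] at hp
      exact Finset.mk_mem_product (mem_meshIndices hM' h₁ hp.1) (mem_meshIndices hM' h₂ hp.2)
    · simp only [Prod.mk.injEq, Nat.cast_inj] at h
      exact Prod.ext h.1 h.2
  rw [Finset.card_product] at hcard
  calc _ ≤ (((J k.1).card * (J k.2.1).card : ℕ) : ℝ) := Nat.cast_le.2 hcard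
    _ ≤ (L + 2) ^ 2 := by
      rw [Nat.cast_mul, pow_two]
      exact mul_le_mul (hJ _) (hJ _) (Nat.cast_nonneg _) ((Nat.cast_nonneg _).trans (hJ 0))

open Classical in
theorem totalOsc_le_mul_Ncubes_graphOn {L : ℝ} (hf : ContinuousOn f sq) (hM : 0 < M) (hε : 0 < ε)
    (hMε : ε ≤ L / M) : totalOsc f M ≤ ε * ((L + 2) ^ 2 * Ncubes (graphOn f sq) ε) := by
  have hfin := finite_cubesOver_sq (isBounded_image_sq hf) hε
  set I := hfin.toFinset
  have hcell : ∀ c ∈ cells M, cubesOver f (gridCell M c) ε =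
      ({k ∈ I | k ∈ cubesOver f (gridCell M c) ε} : Finset (ℤ × ℤ × ℤ)) := fun c hc => by
    ext k
    simpa [I] using fun hk => cubesOver_mono (gridCell_subset_sq hc) hk
  have hOsc : ∀ c ∈ cells M, Osc f (gridCell M c) ≤
      ε * ({k ∈ I | k ∈ cubesOver f (gridCell M c) ε} : Finset (ℤ × ℤ × ℤ)).card := fun c hc => by
    rw [← ncard_coe_finset, ← hcell c hc]
    have hsub := gridCell_subset_sq hc
    exact Osc_le_mul_ncard_cubesOver hε (isPreconnected_Icc.prod isPreconnected_Icc)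
      (hf.mono hsub) (hfin.subset (cubesOver_mono hsub))
  calc totalOsc f M
      ≤ ∑ c ∈ cells M,
          ε * ({k ∈ I | k ∈ cubesOver f (gridCell M c) ε} : Finset (ℤ × ℤ × ℤ)).card :=
        Finset.sum_le_sum hOsc
    _ = ε * ∑ k ∈ I,
          (({c ∈ cells M | k ∈ cubesOver f (gridCell M c) ε} : Finset (ℕ × ℕ)).card : ℝ) := by
        rw [← Finset.mul_sum]
        congr 1
        exact_mod_cast Finset.sum_card_bipartiteAbove_eq_sum_card_bipartiteBelow
          (fun c k => k ∈ cubesOver f (gridCell M c) ε)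
    _ ≤ ε * ∑ k ∈ I, (L + 2) ^ 2 := by
        gcongr with k
        exact card_filter_mem_cubesOver_le hM hε hMε k
    _ = ε * ((L + 2) ^ 2 * Ncubes (graphOn f sq) ε) := by
        rw [Finset.sum_const, nsmul_eq_mul, mul_comm (I.card : ℝ), Ncubes_graphOn,
          ncard_eq_toFinset_card _ hfin]

end

/-! ### Box dimension -/

section

variable {f : ℝ × ℝ → ℝ} {K N : ℕ} {ε : ℝ}

theorem hasBoxDim_of_eventually_le {E : Set (ℝ × ℝ × ℝ)} {d : ℝ}
    (hup : ∀ d' > d, ∃ C > 0, ∀ᶠ ε in nhdsWithin (0 : ℝ) (Ioi 0),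
      (Ncubes E ε : ℝ) ≤ C * (1 / ε) ^ d')
    (hlow : ∃ c > 0, ∀ᶠ ε in nhdsWithin (0 : ℝ) (Ioi 0), c * (1 / ε) ^ d ≤ (Ncubes E ε : ℝ)) :
    HasBoxDim E d := by
  have hlog : Tendsto (fun ε : ℝ => Real.log (1 / ε)) (nhdsWithin 0 (Ioi 0)) atTop := by
    simp only [one_div]
    exact Real.tendsto_log_atTop.comp tendsto_inv_nhdsGT_zero
  have hlim (x y : ℝ) : Tendsto (fun ε : ℝ => x / Real.log (1 / ε) + y)
      (nhdsWithin 0 (Ioi 0)) (nhds y) := by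
    simpa using (hlog.const_div_atTop x).add_const y
  have hratio {c ε e : ℝ} (hc : 0 < c) (hε : 0 < ε) (h : 0 < Real.log (1 / ε)) :
      Real.log c / Real.log (1 / ε) + e = Real.log (c * (1 / ε) ^ e) / Real.log (1 / ε) := by
    have hε' : 0 < 1 / ε := one_div_pos.2 hε
    rw [Real.log_mul hc.ne' (Real.rpow_pos_of_pos hε' _).ne', Real.log_rpow hε', add_div,
      mul_div_cancel_right₀ _ h.ne']
  obtain ⟨c, hc, hlow⟩ := hlow
  have hlow_pos : ∀ᶠ ε in nhdsWithin (0 : ℝ) (Ioi 0), 0 < c * (1 / ε) ^ d :=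
    eventually_mem_nhdsWithin.mono fun ε hε =>
      mul_pos hc (Real.rpow_pos_of_pos (one_div_pos.2 hε) _)
  refine tendsto_order.2 ⟨fun a ha => ?_, fun b hb => ?_⟩
  · filter_upwards [hlow, hlow_pos, self_mem_nhdsWithin, hlog.eventually_gt_atTop 0,
      (hlim (Real.log c) d).eventually_const_lt ha] with ε hle hpos hε hlogε hlt
    rw [hratio hc hε hlogε] at hlt
    refine hlt.trans_le ?_
    unfold boxRatio
    gcongr
  · obtain ⟨d', hd, hd'⟩ := exists_between hb
    obtain ⟨C, hC, hup⟩ := hup d' hd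
    filter_upwards [hup, hlow, hlow_pos, self_mem_nhdsWithin, hlog.eventually_gt_atTop 0,
      (hlim (Real.log C) d').eventually_lt_const hd'] with ε hle hge hpos hε hlogε hlt
    rw [hratio hC hε hlogε] at hlt
    refine hlt.trans_le' ?_
    unfold boxRatio
    gcongr
    exact hpos.trans_le hge

theorem eventually_pos_and_le_one_div (hN : 0 < N) :
    ∀ᶠ ε in nhdsWithin (0 : ℝ) (Ioi 0), 0 < ε ∧ ε ≤ 1 / (N : ℝ) :=
  Filter.mem_of_superset (Ioo_mem_nhdsGT (by positivity : (0 : ℝ) < 1 / N))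
    fun _ hε => ⟨hε.1, hε.2.le⟩

theorem exists_one_div_le_and_le_one_div (hK : 1 < K) (hN : 0 < N) (hε : 0 < ε)
    (hεN : ε ≤ 1 / (N : ℝ)) :
    ∃ n : ℕ, 1 / ((K : ℝ) ^ (n + 1) * N) ≤ ε ∧ ε ≤ 1 / ((K : ℝ) ^ n * N) := by
  have hN' : (0 : ℝ) < N := Nat.cast_pos.2 hN
  have hK' : (1 : ℝ) < K := by exact_mod_cast hK
  obtain ⟨n, hn, hn'⟩ := exists_nat_pow_near
    ((one_le_div (by positivity)).2 ((le_div_iff₀ hN').1 hεN)) hK'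
  have hKn : (0 : ℝ) < K ^ n := by positivity
  refine ⟨n, ?_, ?_⟩
  · rw [div_lt_iff₀ (by positivity)] at hn'
    rw [div_le_iff₀ (by positivity)]
    linarith
  · rw [le_div_iff₀ (by positivity)] at hn ⊢
    linarith

theorem one_div_rpow_one_add (hε : 0 < ε) (e : ℝ) :
    (1 / ε) ^ (1 + e) = 1 / ε * (1 / ε) ^ e := by
  rw [Real.rpow_add (one_div_pos.2 hε), Real.rpow_one]

theorem rpow_pow_comm {K : ℝ} (hK : 0 ≤ K) (e : ℝ) (n : ℕ) : (K ^ e) ^ n = (K ^ n) ^ e := by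
  rw [← Real.rpow_mul_natCast hK, ← Real.rpow_natCast_mul hK, mul_comm]

theorem eventually_Ncubes_graphOn_le (hf : Bornology.IsBounded (f '' sq)) (hK : 1 < K)
    (hN : 0 < N) {C e : ℝ} (hC : 0 ≤ C) (he : 1 ≤ e)
    (h : ∀ n, totalOsc f (K ^ n * N) ≤ C * ((K : ℝ) ^ e) ^ n) :
    ∃ C' > 0, ∀ᶠ ε in nhdsWithin (0 : ℝ) (Ioi 0),
      (Ncubes (graphOn f sq) ε : ℝ) ≤ C' * (1 / ε) ^ (1 + e) := by
  have hN' : (1 : ℝ) ≤ N := by exact_mod_cast hN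
  have hK' : (0 : ℝ) < K := by positivity
  refine ⟨18 * (C * K ^ e + K ^ 2), by positivity, ?_⟩
  filter_upwards [eventually_pos_and_le_one_div hN] with ε ⟨hε, hεN⟩
  obtain ⟨n, hn, hn'⟩ := exists_one_div_le_and_le_one_div hK hN hε hεN
  set M := K ^ (n + 1) * N with hM
  have hKn : (K : ℝ) ^ n * N ≤ 1 / ε := (le_one_div (by positivity) hε).2 hn'
  have hx : 1 ≤ 1 / ε := (one_le_div hε).2 (hεN.trans (div_le_one_of_le₀ hN' (by positivity)))
  have hpow : ((K : ℝ) ^ n) ^ e ≤ (1 / ε) ^ e := by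
    gcongr
    exact (le_mul_of_one_le_right (by positivity) hN').trans hKn
  have hOsc : totalOsc f M / ε ≤ C * K ^ e * (1 / ε) ^ (1 + e) := calc
    totalOsc f M / ε ≤ C * (K ^ e) ^ (n + 1) / ε := by gcongr; exact h _
    _ = C * K ^ e * (1 / ε * (K ^ n) ^ e) := by rw [pow_succ, rpow_pow_comm hK'.le]; ring
    _ ≤ C * K ^ e * (1 / ε) ^ (1 + e) := by rw [one_div_rpow_one_add hε]; gcongr
  have hsq : (M : ℝ) ^ 2 ≤ K ^ 2 * (1 / ε) ^ (1 + e) := calc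
    (M : ℝ) ^ 2 = K ^ 2 * (K ^ n * N) ^ 2 := by rw [hM]; push_cast; ring
    _ ≤ K ^ 2 * (1 / ε) ^ 2 := by gcongr
    _ ≤ K ^ 2 * (1 / ε) ^ (1 + e) := by
      rw [← Real.rpow_two (1 / ε)]
      gcongr
      linarith
  calc (Ncubes (graphOn f sq) ε : ℝ) ≤ 18 * (totalOsc f M / ε + M ^ 2) :=
        Ncubes_graphOn_le hf (by positivity) (by rw [hM]; exact_mod_cast hn)
    _ ≤ 18 * (C * K ^ e * (1 / ε) ^ (1 + e) + K ^ 2 * (1 / ε) ^ (1 + e)) := by gcongr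
    _ = 18 * (C * K ^ e + K ^ 2) * (1 / ε) ^ (1 + e) := by ring

theorem eventually_le_Ncubes_graphOn (hf : ContinuousOn f sq) (hK : 1 < K) (hN : 0 < N)
    {δ e : ℝ} (hδ : 0 < δ) (he : 0 ≤ e)
    (h : ∀ n, δ * ((K : ℝ) ^ e) ^ n ≤ totalOsc f (K ^ n * N)) :
    ∃ c > 0, ∀ᶠ ε in nhdsWithin (0 : ℝ) (Ioi 0),
      c * (1 / ε) ^ (1 + e) ≤ (Ncubes (graphOn f sq) ε : ℝ) := by
  have hK' : (0 : ℝ) < K := by positivity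
  refine ⟨δ / (N ^ e * (K + 2) ^ 2), by positivity, ?_⟩
  filter_upwards [eventually_pos_and_le_one_div hN] with ε ⟨hε, hεN⟩
  obtain ⟨n, hn, hn'⟩ := exists_one_div_le_and_le_one_div hK hN hε hεN
  have hmesh : ε ≤ K / (K ^ (n + 1) * N : ℕ) := hn'.trans_eq (by
    push_cast
    rw [pow_succ]
    field_simp)
  have hpow : (1 / ε) ^ e ≤ (K ^ e) ^ (n + 1) * N ^ e := calc
    (1 / ε) ^ e ≤ ((K : ℝ) ^ (n + 1) * N) ^ e := by
      gcongr
      exact (one_div_le (by positivity) hε).1 hn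
    _ = (K ^ e) ^ (n + 1) * N ^ e := by
      rw [Real.mul_rpow (by positivity) (by positivity), rpow_pow_comm hK'.le]
  have hOsc : δ * (K ^ e) ^ (n + 1) ≤ ε * ((K + 2) ^ 2 * Ncubes (graphOn f sq) ε) :=
    (h (n + 1)).trans (totalOsc_le_mul_Ncubes_graphOn hf (by positivity) hε hmesh)
  calc δ / (N ^ e * (K + 2) ^ 2) * (1 / ε) ^ (1 + e)
      ≤ δ / (N ^ e * (K + 2) ^ 2) * (1 / ε * ((K ^ e) ^ (n + 1) * N ^ e)) := by
        rw [one_div_rpow_one_add hε]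
        gcongr
    _ = δ * (K ^ e) ^ (n + 1) / (ε * (K + 2) ^ 2) := by field_simp
    _ ≤ Ncubes (graphOn f sq) ε := by
        rw [div_le_iff₀ (by positivity)]
        linarith

theorem forall_gt_exists_Ncubes_graphOn_le (hf : Bornology.IsBounded (f '' sq)) (hK : 1 < K)
    (hN : 0 < N) {ρ : ℝ} (hρ : K ≤ ρ)
    (h : ∀ θ > ρ, ∃ C, 0 ≤ C ∧ ∀ n, totalOsc f (K ^ n * N) ≤ C * θ ^ n) :
    ∀ d > 1 + Real.logb K ρ, ∃ C > 0, ∀ᶠ ε in nhdsWithin (0 : ℝ) (Ioi 0),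
      (Ncubes (graphOn f sq) ε : ℝ) ≤ C * (1 / ε) ^ d := by
  have hK' : (1 : ℝ) < K := by exact_mod_cast hK
  have hρ0 : 0 < ρ := by linarith
  intro d hd
  obtain ⟨e, rfl⟩ : ∃ e, 1 + e = d := ⟨d - 1, by ring⟩
  rw [gt_iff_lt, add_lt_add_iff_left] at hd
  obtain ⟨C, hC, hCe⟩ := h (K ^ e) ((Real.logb_lt_iff_lt_rpow hK' hρ0).1 hd)
  have he : 1 ≤ e := ((Real.le_logb_iff_rpow_le hK' hρ0).2 (by rwa [Real.rpow_one])).trans hd.le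
  exact eventually_Ncubes_graphOn_le hf hK hN hC he hCe

theorem hasBoxDim_graphOn_one_add_logb (hf : ContinuousOn f sq) (hK : 1 < K) (hN : 0 < N)
    {ρ : ℝ} (hρ : K ≤ ρ)
    (hup : ∀ θ > ρ, ∃ C, 0 ≤ C ∧ ∀ n, totalOsc f (K ^ n * N) ≤ C * θ ^ n)
    (hlow : ∃ δ, 0 < δ ∧ ∀ n, δ * ρ ^ n ≤ totalOsc f (K ^ n * N)) :
    HasBoxDim (graphOn f sq) (1 + Real.logb K ρ) := by
  have hK' : (1 : ℝ) < K := by exact_mod_cast hK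
  obtain ⟨δ, hδ, hlow⟩ := hlow
  refine hasBoxDim_of_eventually_le
    (forall_gt_exists_Ncubes_graphOn_le (isBounded_image_sq hf) hK hN hρ hup)
    (eventually_le_Ncubes_graphOn hf hK hN hδ (Real.logb_nonneg hK' (by linarith)) ?_)
  rwa [Real.rpow_logb (by linarith) hK'.ne' (by linarith)]

theorem hasBoxDim_graphOn_two (hf : Bornology.IsBounded (f '' sq)) (hK : 1 < K) (hN : 0 < N)
    (hup : ∀ θ > (K : ℝ), ∃ C, 0 ≤ C ∧ ∀ n, totalOsc f (K ^ n * N) ≤ C * θ ^ n) :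
    HasBoxDim (graphOn f sq) 2 := by
  have hlogb : 1 + Real.logb K K = 2 := by
    rw [Real.logb_self_eq_one (by exact_mod_cast hK), one_add_one_eq_two]
  refine hasBoxDim_of_eventually_le
    (hlogb ▸ forall_gt_exists_Ncubes_graphOn_le hf hK hN le_rfl hup) ⟨1, one_pos, ?_⟩
  filter_upwards [self_mem_nhdsWithin] with ε hε
  rw [one_mul, Real.rpow_two]
  exact one_div_sq_le_Ncubes_graphOn hf hε

end

end RFIS

open RFIS in
/-- **Corollary 4.11.**  Assume steadiness and uniform sums `γ_{rt}` under a compatible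
partition (`γ_{rt} = 0` when `Λ_r ∩ Λ'_t = ∅`), and that the matrix `G = (γ_{rt})` is
irreducible (equivalently, `{1,…,m}` is connected: there is a path between any two
indices).  Then (1) if `{1,…,m}` is non-degenerate and `ρ(G) > K`, the box dimension of
`Γ f` exists and equals `1 + log ρ(G) / log K`; (2) otherwise it exists and equals `2`. -/
theorem boxDim_bilinear_RFIS_irreducible (st : Setup) (m : ℕ) (B : Fin m → Set (ℝ × ℝ))
    (γ : Fin m → Fin m → ℝ) (hpart : IsPartition m B) (hcomp : IsCompatible st B)
    (hsteady : Steady st) (hus : HasUniformSums st B γ) (hγ0 : GammaZero st B γ)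
    (hirr : ∀ r t : Fin m, IsPathFrom γ t r) :
    (((∃ i j, 1 ≤ i ∧ i ≤ st.N ∧ 1 ≤ j ∧ j ≤ st.N ∧ ¬ DegenPair st i j) ∧
        (st.K : ℝ) < specRad (Matrix.of γ)) →
      HasBoxDim (graphOn st.f sq)
        (1 + Real.log (specRad (Matrix.of γ)) / Real.log (st.K : ℝ))) ∧
    (¬ ((∃ i j, 1 ≤ i ∧ i ≤ st.N ∧ 1 ≤ j ∧ j ≤ st.N ∧ ¬ DegenPair st i j) ∧
        (st.K : ℝ) < specRad (Matrix.of γ)) →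
      HasBoxDim (graphOn st.f sq) 2) := by
  obtain ⟨cl, hcl⟩ := exists_isClassMap hpart hcomp
  have hγ := isTransferMatrix hcomp hsteady hus hγ0 hcl
  rw [st.exists_not_degenPair_iff]
  constructor
  · rintro ⟨hnd, hρ⟩
    obtain ⟨σ, hσ, c, hc, hpos⟩ := st.exists_cellDev_pos hsteady hnd
    rw [Real.log_div_log]
    exact hasBoxDim_graphOn_one_add_logb st.hfcont st.hK st.pos_N hρ.le
      (fun θ hθ => exists_totalOsc_le hγ (hρ.trans hθ) hθ)
      (exists_mul_specRad_pow_le_totalOsc hsteady hγ hirr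
        ((Nat.cast_nonneg _).trans_lt hρ) hσ hc hpos)
  · intro hcase
    refine hasBoxDim_graphOn_two st.isBounded_image_f st.hK st.pos_N fun θ hθ => ?_
    by_cases hnd : ∃ ij ∈ cells st.N, ¬st.IsTrivialPair ij
    · have hρ : specRad (Matrix.of γ) ≤ st.K := not_lt.1 fun hρ => hcase ⟨hnd, hρ⟩
      exact exists_totalOsc_le hγ hθ (hρ.trans_lt hθ)
    · push Not at hnd
      obtain ⟨C, hC, hOsc⟩ := Setup.exists_totalOsc_le_of_isTrivialPair hnd
      exact ⟨C, hC, fun k => (hOsc k).trans (by gcongr)⟩
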